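/- Assume p_1,…,p_m are positive rational numbers. A quiver datum (V, p) is extremizable if and only if V is isomorphic (via base changes g_i ∈ GL(d_i, ℝ) and h_j ∈ GL(n_j, ℝ)) to a direct sum of p-stable representations; that is, there exist dimension vectors d^1, …, d^s with d^1 + ⋯ + d^s = (d_1,…,d_k, n_1,…,n_m) and invertible matrices g_i, h_j such that each transformed matrix h_j V_a g_i^{-1} is block diagonal with blocks of sizes d^ℓ_j × d^ℓ_{\underline i} (ℓ ∈ [s]), and for each ℓ ∈ [s] the ℓ-th diagonal block representation is p-stable. -/

import Mathlib

open Matrix BigOperators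

/-- The value of the capacity functional of a quiver datum `(V, p)` at a tuple `Y`
of `n j × n j` matrices. -/
noncomputable def capVal {k m : ℕ} {d : Fin k → ℕ} {n : Fin m → ℕ} {A : Fin k → Fin m → ℕ}
    (p : Fin m → ℝ)
    (V : ∀ i : Fin k, ∀ j : Fin m, Fin (A i j) → Matrix (Fin (n j)) (Fin (d i)) ℝ)
    (Y : ∀ j : Fin m, Matrix (Fin (n j)) (Fin (n j)) ℝ) : ℝ :=
  (∏ i : Fin k, (∑ j : Fin m, p j • ∑ a : Fin (A i j), (V i j a)ᵀ * Y j * V i j a).det) /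
    ∏ j : Fin m, (Y j).det ^ (p j)

/-- The capacity `cap(V, p)` of a quiver datum: the infimum of the capacity functional
over all tuples of positive definite matrices. -/
noncomputable def cap {k m : ℕ} {d : Fin k → ℕ} {n : Fin m → ℕ} {A : Fin k → Fin m → ℕ}
    (p : Fin m → ℝ)
    (V : ∀ i : Fin k, ∀ j : Fin m, Fin (A i j) → Matrix (Fin (n j)) (Fin (d i)) ℝ) : ℝ :=
  sInf { r : ℝ | ∃ Y : ∀ j : Fin m, Matrix (Fin (n j)) (Fin (n j)) ℝ,
    (∀ j, (Y j).PosDef) ∧ r = capVal p V Y }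

/-- A quiver datum `(V, p)` is extremizable if it is feasible (`cap(V,p) > 0`) and the
infimum defining the capacity is attained at some tuple of positive definite matrices. -/
def Extremizable {k m : ℕ} {d : Fin k → ℕ} {n : Fin m → ℕ} {A : Fin k → Fin m → ℕ}
    (p : Fin m → ℝ)
    (V : ∀ i : Fin k, ∀ j : Fin m, Fin (A i j) → Matrix (Fin (n j)) (Fin (d i)) ℝ) : Prop :=
  0 < cap p V ∧ ∃ Y : ∀ j : Fin m, Matrix (Fin (n j)) (Fin (n j)) ℝ,
    (∀ j, (Y j).PosDef) ∧ capVal p V Y = cap p V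

/-- A quiver datum `(V, p)` is geometric. -/
def IsGeometric {k m : ℕ} {d : Fin k → ℕ} {n : Fin m → ℕ} {A : Fin k → Fin m → ℕ}
    (p : Fin m → ℝ)
    (V : ∀ i : Fin k, ∀ j : Fin m, Fin (A i j) → Matrix (Fin (n j)) (Fin (d i)) ℝ) : Prop :=
  (∀ i, ∑ j : Fin m, p j • ∑ a : Fin (A i j), (V i j a)ᵀ * V i j a = 1) ∧
  (∀ j, ∑ i : Fin k, ∑ a : Fin (A i j), V i j a * (V i j a)ᵀ = 1)

/-- A representation `W` (of dimension vector `(d, n)`) is `p`-stable: it is nonzero, its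
dimension vector is orthogonal to `p`, and every compatible tuple of subspaces that is
neither zero nor the whole representation satisfies the strict inequality
`∑_i dim U_i < ∑_j p_j dim U_j`. -/
def Stable {k m : ℕ} {d : Fin k → ℕ} {n : Fin m → ℕ} {A : Fin k → Fin m → ℕ}
    (p : Fin m → ℝ)
    (W : ∀ i : Fin k, ∀ j : Fin m, Fin (A i j) → Matrix (Fin (n j)) (Fin (d i)) ℝ) : Prop :=
  ((∃ i, 0 < d i) ∨ (∃ j, 0 < n j)) ∧
  (∑ i : Fin k, (d i : ℝ) = ∑ j : Fin m, p j * (n j : ℝ)) ∧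
  ∀ (U1 : ∀ i : Fin k, Submodule ℝ (Fin (d i) → ℝ))
    (U2 : ∀ j : Fin m, Submodule ℝ (Fin (n j) → ℝ)),
    (∀ i j a, (U1 i).map (W i j a).mulVecLin ≤ U2 j) →
    ¬((∀ i, U1 i = ⊥) ∧ (∀ j, U2 j = ⊥)) →
    ¬((∀ i, U1 i = ⊤) ∧ (∀ j, U2 j = ⊤)) →
    ∑ i : Fin k, (Module.finrank ℝ (U1 i) : ℝ) <
      ∑ j : Fin m, p j * (Module.finrank ℝ (U2 j) : ℝ)

/-- The embedding of the `ℓ`-th block into the concatenation: `fembed f ℓ r` is the index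
of position `r` of block `ℓ`, the blocks being laid out in increasing order of `ℓ`. -/
def fembed {s : ℕ} (f : Fin s → ℕ) (ℓ : Fin s) (r : Fin (f ℓ)) : Fin (∑ ℓ' : Fin s, f ℓ') :=
  ⟨(∑ ℓ' ∈ Finset.univ.filter (fun ℓ' => ℓ' < ℓ), f ℓ') + (r : ℕ), by
    have h2 : f ℓ + ∑ ℓ' ∈ Finset.univ.filter (fun ℓ' => ℓ' < ℓ), f ℓ' ≤ ∑ ℓ' : Fin s, f ℓ' := by
      rw [← Finset.sum_insert (by simp)]
      exact Finset.sum_le_sum_of_subset (Finset.subset_univ _)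
    have h3 := r.isLt
    omega⟩

/-!
Geometric data are extremal: in orthonormal bases diagonalizing a tuple `Y` and its pullback,
weighted AM–GM bounds the capacity functional at `Y` below by its value at the identity.
Conversely, rescale a minimizer to the identity and normalize the source matrices. Since
`log det M ≤ tr M - dim`, with equality only at the identity, comparing the minimum with one
Sinkhorn step forces the sink matrices to be identities as well. So a datum is extremizable exactly
when some base change of it is geometric.

A stable datum is extremizable because its capacity functional is coercive on tuples
`U diag (exp t) Uᵀ` with `U` orthogonal and `∑ t = 0`. Take the summand of the Cauchy–Binet
expansion whose rows have maximal total weight; the vectors of weight below a level then span a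
proper subrepresentation, and integrating the strict dimension inequality over all levels shows
that this summand grows exponentially along `t`. A direct sum of geometric data is geometric.

In a geometric datum, the defect `∑ p_j dim U_j - ∑ dim U_i` of a subrepresentation `U` is the
weighted sum of the squared Hilbert–Schmidt norms of the off-diagonal parts of the arrows, so it
vanishes exactly when the orthogonal complement of `U` is a subrepresentation too. Hence an
orthogonal decomposition into minimal such summands is a decomposition into stable ones.
-/

section PositiveDefinite

variable {ι : Type*} [Fintype ι] [DecidableEq ι] {M : Matrix ι ι ℝ}

theorem posDef_transpose_mul_mul_iff {h : Matrix ι ι ℝ} (hh : IsUnit h.det) :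
    (hᵀ * M * h).PosDef ↔ M.PosDef := by
  rw [← conjTranspose_eq_transpose_of_trivial, ← star_eq_conjTranspose]
  exact ((isUnit_iff_isUnit_det h).2 hh).posDef_star_left_conjugate_iff

open scoped MatrixOrder Matrix.Norms.L2Operator in
theorem exists_eq_transpose_mul_self_of_posDef (hM : M.PosDef) :
    ∃ K : Matrix ι ι ℝ, IsUnit K.det ∧ Kᵀ * K = M := by
  obtain ⟨K, rfl⟩ := CStarAlgebra.nonneg_iff_eq_star_mul_self.1 hM.posSemidef.nonneg
  refine ⟨K, isUnit_iff_ne_zero.2 fun hK => hM.det_pos.ne' ?_, rfl⟩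
  rw [det_mul, hK, mul_zero]

theorem exists_eq_orthogonal_mul_diagonal_mul_transpose (hM : M.IsHermitian) :
    ∃ U : Matrix ι ι ℝ, Uᵀ * U = 1 ∧ U * diagonal hM.eigenvalues * Uᵀ = M :=
  ⟨hM.eigenvectorUnitary, Unitary.coe_star_mul_self hM.eigenvectorUnitary, by
    conv_rhs => rw [hM.spectral_theorem, Unitary.conjStarAlgAut_apply]
    rfl⟩

theorem log_det_eq_sum_log_eigenvalues (hM : M.PosDef) :
    Real.log M.det = ∑ r, Real.log (hM.isHermitian.eigenvalues r) := by
  rw [hM.isHermitian.det_eq_prod_eigenvalues]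
  exact Real.log_prod fun r _ => (hM.eigenvalues_pos r).ne'

theorem log_det_le_trace_sub_card (hM : M.PosDef) :
    Real.log M.det ≤ M.trace - Fintype.card ι := by
  rw [log_det_eq_sum_log_eigenvalues hM, hM.isHermitian.trace_eq_sum_eigenvalues,
    ← nsmul_one (Fintype.card ι), ← Finset.card_univ, ← Finset.sum_const,
    ← Finset.sum_sub_distrib]
  exact Finset.sum_le_sum fun r _ => Real.log_le_sub_one_of_pos (hM.eigenvalues_pos r)

theorem eq_one_of_log_det_eq (hM : M.PosDef)
    (h : Real.log M.det = M.trace - Fintype.card ι) : M = 1 := by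
  have hlog : ∀ r, Real.log (hM.isHermitian.eigenvalues r) = hM.isHermitian.eigenvalues r - 1 := by
    rw [log_det_eq_sum_log_eigenvalues hM, hM.isHermitian.trace_eq_sum_eigenvalues,
      ← nsmul_one (Fintype.card ι), ← Finset.card_univ, ← Finset.sum_const,
      ← Finset.sum_sub_distrib] at h
    simpa using (Finset.sum_eq_sum_iff_of_le fun r _ =>
      Real.log_le_sub_one_of_pos (hM.eigenvalues_pos r)).1 h
  have hone : hM.isHermitian.eigenvalues = 1 := by
    funext r
    by_contra hr
    exact (Real.log_lt_sub_one_of_pos (hM.eigenvalues_pos r) hr).ne (hlog r)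
  obtain ⟨U, hU, hUM⟩ := exists_eq_orthogonal_mul_diagonal_mul_transpose hM.isHermitian
  rw [← hUM, hone, Pi.one_def, diagonal_one, Matrix.mul_one, mul_eq_one_comm.1 hU]

end PositiveDefinite

/-- The quiver data with source dimensions `d`, sink dimensions `n` and `A i j` arrows
`i → j`. -/
abbrev QuiverDatum {k m : ℕ} (d : Fin k → ℕ) (n : Fin m → ℕ) (A : Fin k → Fin m → ℕ) :=
  ∀ i j, Fin (A i j) → Matrix (Fin (n j)) (Fin (d i)) ℝ

/-- Tuples of square matrices of prescribed sizes: arguments of the capacity functional, and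
base changes at the sources or at the sinks. -/
abbrev MatrixTuple {m : ℕ} (n : Fin m → ℕ) := ∀ j, Matrix (Fin (n j)) (Fin (n j)) ℝ

/-- The source matrices `∑_j p_j ∑_a V_aᵀ Y_j V_a`, whose determinants form the numerator of the
capacity functional. -/
noncomputable def pullback {k m : ℕ} {d : Fin k → ℕ} {n : Fin m → ℕ} {A : Fin k → Fin m → ℕ}
    (p : Fin m → ℝ) (V : QuiverDatum d n A) (Y : MatrixTuple n) : MatrixTuple d :=
  fun i => ∑ j, p j • ∑ a, (V i j a)ᵀ * Y j * V i j a

/-- The sink matrices `∑_i ∑_a V_a V_aᵀ`; both they and the source matrices `pullback p V 1` are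
identities exactly for geometric data. -/
noncomputable def pushforward {k m : ℕ} {d : Fin k → ℕ} {n : Fin m → ℕ} {A : Fin k → Fin m → ℕ}
    (V : QuiverDatum d n A) : MatrixTuple n :=
  fun j => ∑ i, ∑ a, V i j a * (V i j a)ᵀ

/-- Base change `V_a ↦ h_j V_a G_i`. The source matrices enter without an inverse, so that
`G` plays the role of `g⁻¹`. -/
def baseChange {k m : ℕ} {d : Fin k → ℕ} {n : Fin m → ℕ} {A : Fin k → Fin m → ℕ}
    (h : MatrixTuple n) (V : QuiverDatum d n A) (G : MatrixTuple d) : QuiverDatum d n A :=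
  fun i j a => h j * V i j a * G i

/-- `Y` is a positive definite tuple at which the capacity functional attains its minimum,
and this minimum is positive. -/
def IsCapMinimizer {k m : ℕ} {d : Fin k → ℕ} {n : Fin m → ℕ} {A : Fin k → Fin m → ℕ}
    (p : Fin m → ℝ) (V : QuiverDatum d n A) (Y : MatrixTuple n) : Prop :=
  (∀ j, (Y j).PosDef) ∧ 0 < capVal p V Y ∧
    ∀ Z : MatrixTuple n, (∀ j, (Z j).PosDef) → capVal p V Y ≤ capVal p V Z

/-- A quiver datum is geometrizable if some base change of it is geometric. -/
def Geometrizable {k m : ℕ} {d : Fin k → ℕ} {n : Fin m → ℕ} {A : Fin k → Fin m → ℕ}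
    (p : Fin m → ℝ) (V : QuiverDatum d n A) : Prop :=
  ∃ (h : MatrixTuple n) (G : MatrixTuple d), (∀ j, IsUnit (h j).det) ∧ (∀ i, IsUnit (G i).det) ∧
    IsGeometric p (baseChange h V G)

section Capacity

variable {k m : ℕ} {d : Fin k → ℕ} {n : Fin m → ℕ} {A : Fin k → Fin m → ℕ} {p : Fin m → ℝ}
  {V : QuiverDatum d n A} {Y h : MatrixTuple n} {G : MatrixTuple d}

theorem capVal_eq (p : Fin m → ℝ) (V : QuiverDatum d n A) (Y : MatrixTuple n) :
    capVal p V Y = (∏ i, (pullback p V Y i).det) / ∏ j, (Y j).det ^ p j := rfl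

theorem extremizable_iff_exists_isCapMinimizer :
    Extremizable p V ↔ ∃ Y, IsCapMinimizer p V Y := by
  constructor
  · rintro ⟨hpos, Y, hY, hmin⟩
    refine ⟨Y, hY, hmin ▸ hpos, fun Z hZ => hmin ▸ csInf_le ?_ ⟨Z, hZ, rfl⟩⟩
    by_contra hbdd
    exact hpos.ne' (Real.sInf_of_not_bddBelow hbdd)
  · rintro ⟨Y, hY, hpos, hmin⟩
    have hcap : cap p V = capVal p V Y :=
      IsLeast.csInf_eq ⟨⟨Y, hY, rfl⟩, by rintro r ⟨Z, hZ, rfl⟩; exact hmin Z hZ⟩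
    exact ⟨hcap ▸ hpos, Y, hY, hcap.symm⟩

theorem posSemidef_pullback (hp : ∀ j, 0 ≤ p j) (hY : ∀ j, (Y j).PosSemidef) (i : Fin k) :
    (pullback p V Y i).PosSemidef :=
  posSemidef_sum _ fun j _ => (posSemidef_sum _ fun a _ =>
    (hY j).conjTranspose_mul_mul_same (V i j a)).smul (hp j)

theorem posSemidef_pushforward (j : Fin m) : (pushforward V j).PosSemidef :=
  posSemidef_sum _ fun _ _ => posSemidef_sum _ fun _ _ => posSemidef_self_mul_conjTranspose _

theorem prod_det_rpow_pos (hY : ∀ j, (Y j).PosDef) : 0 < ∏ j, (Y j).det ^ p j :=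
  Finset.prod_pos fun j _ => Real.rpow_pos_of_pos (hY j).det_pos _

theorem isGeometric_iff : IsGeometric p V ↔ pullback p V 1 = 1 ∧ pushforward V = 1 := by
  simp only [IsGeometric, funext_iff, pullback, pushforward, Pi.one_apply, Matrix.mul_one]

theorem baseChange_baseChange (h h' : MatrixTuple n) (G G' : MatrixTuple d) :
    baseChange h (baseChange h' V G') G = baseChange (h * h') V (G' * G) := by
  funext i j a
  simp only [baseChange, Pi.mul_apply, Matrix.mul_assoc]

theorem pullback_baseChange (h : MatrixTuple n) (G : MatrixTuple d) (Y : MatrixTuple n)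
    (i : Fin k) : pullback p (baseChange h V G) Y i =
      (G i)ᵀ * pullback p V (fun j => (h j)ᵀ * Y j * h j) i * G i := by
  simp only [pullback, baseChange, Finset.mul_sum, Finset.sum_mul, Matrix.mul_smul,
    Matrix.smul_mul, transpose_mul, Matrix.mul_assoc]

theorem pushforward_baseChange_of_orthogonal (hG : ∀ i, (G i)ᵀ * G i = 1) (j : Fin m) :
    pushforward (baseChange h V G) j = h j * pushforward V j * (h j)ᵀ := by
  have hG' (i) : G i * (G i)ᵀ = 1 := mul_eq_one_comm.1 (hG i)
  simp only [pushforward, baseChange, Finset.mul_sum, Finset.sum_mul, transpose_mul]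
  refine Finset.sum_congr rfl fun i _ => Finset.sum_congr rfl fun a _ => ?_
  calc h j * V i j a * G i * ((G i)ᵀ * ((V i j a)ᵀ * (h j)ᵀ))
      = h j * V i j a * (G i * (G i)ᵀ) * ((V i j a)ᵀ * (h j)ᵀ) := by
        simp only [Matrix.mul_assoc]
    _ = h j * (V i j a * (V i j a)ᵀ) * (h j)ᵀ := by
        rw [hG', Matrix.mul_one]
        simp only [Matrix.mul_assoc]

theorem IsGeometric.baseChange_of_orthogonal (hV : IsGeometric p V)
    (hh : ∀ j, (h j)ᵀ * h j = 1) (hG : ∀ i, (G i)ᵀ * G i = 1) :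
    IsGeometric p (baseChange h V G) := by
  rw [isGeometric_iff] at hV ⊢
  constructor <;> funext
  · simp only [pullback_baseChange, Pi.one_apply, Matrix.mul_one, hh]
    rw [← Pi.one_def, hV.1, Pi.one_apply, Matrix.mul_one, hG]
  · rw [pushforward_baseChange_of_orthogonal hG, hV.2, Pi.one_apply, Matrix.mul_one,
      mul_eq_one_comm.1 (hh _)]

theorem capVal_baseChange (hh : ∀ j, IsUnit (h j).det) (hY : ∀ j, (Y j).PosDef) :
    capVal p (baseChange h V G) Y = (∏ i, (G i).det ^ 2) * (∏ j, ((h j).det ^ 2) ^ p j) *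
      capVal p V (fun j => (h j)ᵀ * Y j * h j) := by
  have hden : ∏ j, ((h j)ᵀ * Y j * h j).det ^ p j =
      (∏ j, ((h j).det ^ 2) ^ p j) * ∏ j, (Y j).det ^ p j := by
    rw [← Finset.prod_mul_distrib]
    refine Finset.prod_congr rfl fun j _ => ?_
    rw [← Real.mul_rpow (sq_nonneg _) (hY j).det_pos.le, det_mul, det_mul, det_transpose]
    ring_nf
  have hnum : ∏ i, (pullback p (baseChange h V G) Y i).det =
      (∏ i, (G i).det ^ 2) * ∏ i, (pullback p V (fun j => (h j)ᵀ * Y j * h j) i).det := by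
    rw [← Finset.prod_mul_distrib]
    refine Finset.prod_congr rfl fun i _ => ?_
    rw [pullback_baseChange, det_mul, det_mul, det_transpose]
    ring
  have hscale : ∏ j, ((h j).det ^ 2) ^ p j ≠ 0 := Finset.prod_ne_zero_iff.2 fun j _ =>
    (Real.rpow_pos_of_pos (sq_pos_of_ne_zero (hh j).ne_zero) _).ne'
  rw [capVal_eq, capVal_eq, hnum, hden, mul_assoc, ← mul_div_assoc,
    mul_div_mul_left _ _ hscale, mul_div_assoc]

theorem isCapMinimizer_baseChange_iff (hh : ∀ j, IsUnit (h j).det) (hG : ∀ i, IsUnit (G i).det) :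
    IsCapMinimizer p (baseChange h V G) Y ↔ IsCapMinimizer p V fun j => (h j)ᵀ * Y j * h j := by
  have hscale : 0 < (∏ i, (G i).det ^ 2) * ∏ j, ((h j).det ^ 2) ^ p j :=
    mul_pos (Finset.prod_pos fun i _ => sq_pos_of_ne_zero (hG i).ne_zero)
      (Finset.prod_pos fun j _ => Real.rpow_pos_of_pos (sq_pos_of_ne_zero (hh j).ne_zero) _)
  have hconj (Z : MatrixTuple n) : ∃ Z' : MatrixTuple n, (fun j => (h j)ᵀ * Z' j * h j) = Z := by
    refine ⟨fun j => (h j)⁻¹ᵀ * Z j * (h j)⁻¹, funext fun j => ?_⟩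
    calc (h j)ᵀ * ((h j)⁻¹ᵀ * Z j * (h j)⁻¹) * h j
        = ((h j)⁻¹ * h j)ᵀ * Z j * ((h j)⁻¹ * h j) := by
          simp only [transpose_mul, Matrix.mul_assoc]
      _ = Z j := by rw [nonsing_inv_mul _ (hh j), transpose_one, Matrix.one_mul, Matrix.mul_one]
  simp only [IsCapMinimizer, posDef_transpose_mul_mul_iff (hh _)]
  refine and_congr_right fun hY => ?_
  rw [capVal_baseChange hh hY, mul_pos_iff_of_pos_left hscale]
  refine and_congr_right fun _ => ⟨fun hmin Z hZ => ?_, fun hmin Z hZ => ?_⟩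
  · obtain ⟨Z, rfl⟩ := hconj Z
    simp only [posDef_transpose_mul_mul_iff (hh _)] at hZ
    have hle := hmin Z hZ
    rw [capVal_baseChange hh hZ] at hle
    exact le_of_mul_le_mul_left hle hscale
  · rw [capVal_baseChange hh hZ]
    exact mul_le_mul_of_nonneg_left
      (hmin _ fun j => (posDef_transpose_mul_mul_iff (hh j)).2 (hZ j)) hscale.le

theorem capVal_exp_smul (hY : ∀ j, (Y j).PosDef) (s : ℝ) :
    capVal p V (Real.exp s • Y) =
      Real.exp (s * (∑ i, (d i : ℝ) - ∑ j, p j * n j)) * capVal p V Y := by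
  have hpull (i) : pullback p V (Real.exp s • Y) i = Real.exp s • pullback p V Y i := by
    simp only [pullback, Pi.smul_apply, Matrix.mul_smul, Matrix.smul_mul, Finset.smul_sum,
      smul_comm (Real.exp s)]
  have hnum : ∏ i, (pullback p V (Real.exp s • Y) i).det =
      Real.exp (s * ∑ i, (d i : ℝ)) * ∏ i, (pullback p V Y i).det := by
    simp only [hpull, det_smul, Fintype.card_fin, Finset.prod_mul_distrib, ← Real.exp_nat_mul,
      ← Real.exp_sum, mul_comm s, Finset.sum_mul]
  have hden : ∏ j, ((Real.exp s • Y) j).det ^ p j =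
      Real.exp (s * ∑ j, p j * n j) * ∏ j, (Y j).det ^ p j := by
    rw [Finset.mul_sum, Real.exp_sum, ← Finset.prod_mul_distrib]
    refine Finset.prod_congr rfl fun j _ => ?_
    rw [Pi.smul_apply, det_smul, Fintype.card_fin, ← Real.exp_nat_mul,
      Real.mul_rpow (Real.exp_pos _).le (hY j).det_pos.le, ← Real.exp_mul]
    ring_nf
  rw [capVal_eq, capVal_eq, hnum, hden, mul_sub, Real.exp_sub, div_mul_div_comm]

end Capacity

section GeometricIsExtremal

theorem prod_rpow_le_prod_sum_mul {α β : Type*} [Fintype α] [Fintype β] {c : α → β → ℝ}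
    (hc : ∀ s x, 0 ≤ c s x) (hrow : ∀ s, ∑ x, c s x = 1) {l : β → ℝ} (hl : ∀ x, 0 < l x) :
    ∏ x, l x ^ ∑ s, c s x ≤ ∏ s, ∑ x, c s x * l x :=
  calc ∏ x, l x ^ ∑ s, c s x = ∏ s, ∏ x, l x ^ c s x := by
        rw [Finset.prod_comm]
        exact Finset.prod_congr rfl fun x _ => Real.rpow_sum_of_pos (hl x) _ _
    _ ≤ ∏ s, ∑ x, c s x * l x :=
        Finset.prod_le_prod
          (fun s _ => Finset.prod_nonneg fun x _ => Real.rpow_nonneg (hl x).le _)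
          fun s _ => Real.geom_mean_le_arith_mean_weighted _ _ _ (fun x _ => hc s x) (hrow s)
            fun x _ => (hl x).le

variable {k m : ℕ} {d : Fin k → ℕ} {n : Fin m → ℕ} {A : Fin k → Fin m → ℕ} {p : Fin m → ℝ}
  {W : QuiverDatum d n A} {Z : MatrixTuple n}

theorem pullback_diagonal_apply_self (l : ∀ j, Fin (n j) → ℝ) (i : Fin k) (s : Fin (d i)) :
    pullback p W (fun j => diagonal (l j)) i s s =
      ∑ x : Σ j, Fin (n j), p x.1 * (∑ a, W i x.1 a x.2 s ^ 2) * l x.1 x.2 := by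
  simp only [pullback, Matrix.sum_apply, Matrix.smul_apply, smul_eq_mul, Fintype.sum_sigma,
    Matrix.mul_apply (M := _ * diagonal _), mul_diagonal, transpose_apply, mul_assoc,
    ← Finset.mul_sum, Finset.sum_mul]
  refine Finset.sum_congr rfl fun j _ => ?_
  rw [Finset.sum_comm]
  refine congrArg _ (Finset.sum_congr rfl fun r _ => Finset.sum_congr rfl fun a _ => ?_)
  ring

theorem pushforward_apply_self (j : Fin m) (r : Fin (n j)) :
    pushforward W j r r = ∑ x : Σ i, Fin (d i), ∑ a, W x.1 j a r x.2 ^ 2 := by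
  simp only [pushforward, Matrix.sum_apply, Matrix.mul_apply, transpose_apply,
    Fintype.sum_sigma, sq]
  exact Finset.sum_congr rfl fun i _ => Finset.sum_comm

theorem IsGeometric.prod_rpow_le_prod_diag (hp : ∀ j, 0 ≤ p j) (hW : IsGeometric p W)
    {l : ∀ j, Fin (n j) → ℝ} (hl : ∀ j r, 0 < l j r) :
    ∏ j, ∏ r, l j r ^ p j ≤ ∏ i, ∏ s, pullback p W (fun j => diagonal (l j)) i s s := by
  obtain ⟨hpull, hpush⟩ := isGeometric_iff.1 hW
  let c (s : Σ i, Fin (d i)) (x : Σ j, Fin (n j)) : ℝ :=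
    p x.1 * ∑ a, W s.1 x.1 a x.2 s.2 ^ 2
  have hc (s x) : 0 ≤ c s x :=
    mul_nonneg (hp _) (Finset.sum_nonneg fun a _ => sq_nonneg _)
  have hrow (s) : ∑ x, c s x = 1 := by
    have hdiag := pullback_diagonal_apply_self (p := p) (W := W) (fun _ _ => 1) s.1 s.2
    simp only [diagonal_one, mul_one] at hdiag
    rw [← hdiag, ← Pi.one_def, hpull, Pi.one_apply, one_apply_eq]
  have hcol (x) : ∑ s, c s x = p x.1 := by
    rw [← Finset.mul_sum, ← pushforward_apply_self, hpush, Pi.one_apply, one_apply_eq, mul_one]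
  calc ∏ j, ∏ r, l j r ^ p j = ∏ x : Σ j, Fin (n j), l x.1 x.2 ^ ∑ s, c s x := by
        simp only [hcol, Fintype.prod_sigma]
    _ ≤ ∏ s, ∑ x, c s x * l x.1 x.2 := prod_rpow_le_prod_sum_mul hc hrow fun x => hl x.1 x.2
    _ = _ := by simp only [c, ← pullback_diagonal_apply_self, Fintype.prod_sigma]

-- Orthogonal base changes diagonalize both `Z` and its pullback, without affecting geometricity.
theorem IsGeometric.prod_det_rpow_le (hp : ∀ j, 0 ≤ p j) (hW : IsGeometric p W)
    (hZ : ∀ j, (Z j).PosDef) : ∏ j, (Z j).det ^ p j ≤ ∏ i, (pullback p W Z i).det := by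
  have hM (i) := (posSemidef_pullback (V := W) hp (fun j => (hZ j).posSemidef) i).isHermitian
  choose U hU hUZ using fun j =>
    exists_eq_orthogonal_mul_diagonal_mul_transpose (hZ j).isHermitian
  choose Q hQ hQM using fun i => exists_eq_orthogonal_mul_diagonal_mul_transpose (hM i)
  have hdiag (i) : pullback p (baseChange (fun j => (U j)ᵀ) W Q)
      (fun j => diagonal (hZ j).isHermitian.eigenvalues) i = diagonal (hM i).eigenvalues := by
    simp only [pullback_baseChange, transpose_transpose, hUZ]
    conv_lhs => rw [← hQM i]
    calc _ = ((Q i)ᵀ * Q i) * diagonal (hM i).eigenvalues * ((Q i)ᵀ * Q i) := by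
          simp only [Matrix.mul_assoc]
      _ = _ := by rw [hQ, Matrix.one_mul, Matrix.mul_one]
  have hgeom : IsGeometric p (baseChange (fun j => (U j)ᵀ) W Q) :=
    hW.baseChange_of_orthogonal (fun j => mul_eq_one_comm.1 (hU j)) hQ
  calc ∏ j, (Z j).det ^ p j = ∏ j, ∏ r, (hZ j).isHermitian.eigenvalues r ^ p j := by
        refine Finset.prod_congr rfl fun j _ => ?_
        rw [(hZ j).isHermitian.det_eq_prod_eigenvalues]
        exact (Real.finsetProd_rpow _ _ (fun r _ => ((hZ j).eigenvalues_pos r).le) _).symm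
    _ ≤ ∏ i, ∏ s, (hM i).eigenvalues s := by
        simpa only [hdiag, diagonal_apply_eq] using
          hgeom.prod_rpow_le_prod_diag hp fun j => (hZ j).eigenvalues_pos
    _ = ∏ i, (pullback p W Z i).det :=
        Finset.prod_congr rfl fun i _ => (hM i).det_eq_prod_eigenvalues.symm

theorem capVal_one_of_pullback_eq_one (hW : pullback p W 1 = 1) : capVal p W 1 = 1 := by
  simp only [capVal_eq, hW, Pi.one_apply, det_one, Finset.prod_const_one, Real.one_rpow, div_one]

theorem IsGeometric.isCapMinimizer_one (hp : ∀ j, 0 ≤ p j) (hW : IsGeometric p W) :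
    IsCapMinimizer p W 1 := by
  have hone := capVal_one_of_pullback_eq_one (isGeometric_iff.1 hW).1
  refine ⟨fun j => PosDef.one, hone ▸ one_pos, fun Z hZ => hone ▸ ?_⟩
  exact (one_le_div (prod_det_rpow_pos hZ)).2 (hW.prod_det_rpow_le hp hZ)

end GeometricIsExtremal

section ExtremalIsGeometric

variable {k m : ℕ} {d : Fin k → ℕ} {n : Fin m → ℕ} {A : Fin k → Fin m → ℕ} {p : Fin m → ℝ}
  {V W : QuiverDatum d n A} {Y Z : MatrixTuple n}

theorem IsCapMinimizer.sum_eq (hY : IsCapMinimizer p V Y) :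
    ∑ i, (d i : ℝ) = ∑ j, p j * n j := by
  obtain ⟨hPD, hpos, hmin⟩ := hY
  have hscale (s : ℝ) : 0 ≤ s * (∑ i, (d i : ℝ) - ∑ j, p j * n j) := by
    have hle := hmin (Real.exp s • Y) fun j => (hPD j).smul (Real.exp_pos s)
    rw [capVal_exp_smul hPD] at hle
    exact Real.one_le_exp_iff.1 (le_of_mul_le_mul_right (by rwa [one_mul]) hpos)
  linarith [hscale 1, hscale (-1)]

theorem sum_trace_pullback (W : QuiverDatum d n A) (Y : MatrixTuple n) :
    ∑ i, (pullback p W Y i).trace = ∑ j, p j * (pushforward W j * Y j).trace := by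
  simp only [pullback, pushforward, trace_sum, trace_smul, smul_eq_mul, Finset.sum_mul,
    Matrix.mul_assoc, Finset.mul_sum]
  rw [Finset.sum_comm]
  refine Finset.sum_congr rfl fun j _ => Finset.sum_congr rfl fun i _ =>
    Finset.sum_congr rfl fun a _ => ?_
  rw [← Matrix.mul_assoc, trace_mul_comm]

theorem IsCapMinimizer.sum_mul_log_det_le (hp : ∀ j, 0 ≤ p j) (hW : pullback p W 1 = 1)
    (hmin : IsCapMinimizer p W 1) (hZ : ∀ j, (Z j).PosDef) :
    ∑ j, p j * Real.log (Z j).det ≤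
      ∑ j, p j * (pushforward W j * Z j).trace - ∑ i, (d i : ℝ) := by
  have hle : ∏ j, (Z j).det ^ p j ≤ ∏ i, (pullback p W Z i).det := by
    have h := hmin.2.2 Z hZ
    rwa [capVal_one_of_pullback_eq_one hW, capVal_eq, one_le_div (prod_det_rpow_pos hZ)] at h
  have hne := Finset.prod_ne_zero_iff.1 ((prod_det_rpow_pos hZ).trans_le hle).ne'
  have hPD (i) : (pullback p W Z i).PosDef :=
    (posSemidef_pullback hp (fun j => (hZ j).posSemidef) i).posDef_iff_det_ne_zero.2
      (hne i (Finset.mem_univ i))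
  calc ∑ j, p j * Real.log (Z j).det = Real.log (∏ j, (Z j).det ^ p j) := by
        rw [Real.log_prod fun j _ => (Real.rpow_pos_of_pos (hZ j).det_pos _).ne']
        exact Finset.sum_congr rfl fun j _ => (Real.log_rpow (hZ j).det_pos _).symm
    _ ≤ Real.log (∏ i, (pullback p W Z i).det) := Real.log_le_log (prod_det_rpow_pos hZ) hle
    _ = ∑ i, Real.log (pullback p W Z i).det := Real.log_prod hne
    _ ≤ ∑ i, ((pullback p W Z i).trace - d i) := Finset.sum_le_sum fun i _ => by
        simpa using log_det_le_trace_sub_card (hPD i)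
    _ = _ := by rw [Finset.sum_sub_distrib, sum_trace_pullback]

theorem sum_mul_trace_pushforward (hW : pullback p W 1 = 1) :
    ∑ j, p j * (pushforward W j).trace = ∑ i, (d i : ℝ) := by
  simpa [hW] using (sum_trace_pullback (p := p) W 1).symm

-- Test minimality against `1 + z zᵀ`: along the kernel of the pushforward the trace term does
-- not see the perturbation, whereas the determinant grows.
theorem IsCapMinimizer.eq_zero_of_pushforward_mulVec_eq_zero (hp : ∀ j, 0 < p j)
    (hW : pullback p W 1 = 1) (hmin : IsCapMinimizer p W 1) {z : ∀ j, Fin (n j) → ℝ}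
    (hz : ∀ j, pushforward W j *ᵥ z j = 0) (j : Fin m) : z j = 0 := by
  have hPD (j) : (1 + vecMulVec (z j) (z j)).PosDef :=
    PosDef.one.add_posSemidef (by simpa using posSemidef_vecMulVec_self_star (z j))
  have hdet (j) : (1 + vecMulVec (z j) (z j)).det = 1 + z j ⬝ᵥ z j := by
    rw [vecMulVec_eq Unit, det_one_add_replicateCol_mul_replicateRow]
  have htrace (j) : (pushforward W j * (1 + vecMulVec (z j) (z j))).trace =
      (pushforward W j).trace := by
    rw [Matrix.mul_add, Matrix.mul_one, mul_vecMulVec, hz, zero_vecMulVec, add_zero]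
  have hle : ∑ j, p j * Real.log (1 + z j ⬝ᵥ z j) ≤ 0 := by
    simpa only [htrace, hdet, sum_mul_trace_pushforward hW, sub_self] using
      hmin.sum_mul_log_det_le (fun j => (hp j).le) hW hPD
  have hdot (j) : 0 ≤ z j ⬝ᵥ z j := by simpa using dotProduct_star_self_nonneg (z j)
  have hterm (j) : 0 ≤ p j * Real.log (1 + z j ⬝ᵥ z j) :=
    mul_nonneg (hp j).le (Real.log_nonneg (by linarith [hdot j]))
  have hzero := (Finset.sum_eq_zero_iff_of_nonneg fun j _ => hterm j).1
    (hle.antisymm (Finset.sum_nonneg fun j _ => hterm j)) j (Finset.mem_univ j)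
  refine dotProduct_self_eq_zero.1 ((hdot j).antisymm' ?_)
  by_contra! hpos
  exact (mul_pos (hp j) (Real.log_pos (by linarith))).ne' hzero

theorem IsCapMinimizer.posDef_pushforward (hp : ∀ j, 0 < p j) (hW : pullback p W 1 = 1)
    (hmin : IsCapMinimizer p W 1) (j : Fin m) : (pushforward W j).PosDef := by
  refine (posSemidef_pushforward j).posDef_iff_det_ne_zero.2 fun hdet => ?_
  obtain ⟨v, hv, hker⟩ := exists_mulVec_eq_zero_iff.2 hdet
  refine hv ?_
  have hz (j') : pushforward W j' *ᵥ (Pi.single j v : ∀ j, Fin (n j) → ℝ) j' = 0 := by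
    obtain rfl | hne := eq_or_ne j' j
    · rwa [Pi.single_eq_same]
    · rw [Pi.single_eq_of_ne hne, mulVec_zero]
  simpa using hmin.eq_zero_of_pushforward_mulVec_eq_zero hp hW hz j

-- Test minimality against the inverse of the pushforward (one step of Sinkhorn scaling).
theorem IsCapMinimizer.isGeometric (hp : ∀ j, 0 < p j) (hW : pullback p W 1 = 1)
    (hmin : IsCapMinimizer p W 1) : IsGeometric p W := by
  have hQ := hmin.posDef_pushforward hp hW
  have hinv := hmin.sum_mul_log_det_le (fun j => (hp j).le) hW fun j => (hQ j).inv
  simp only [mul_nonsing_inv _ (hQ _).det_pos.ne'.isUnit, trace_one, Fintype.card_fin,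
    det_nonsing_inv, Ring.inverse_eq_inv', Real.log_inv, mul_neg, Finset.sum_neg_distrib,
    hmin.sum_eq, sub_self, neg_nonpos] at hinv
  have hterm (j) : p j * Real.log (pushforward W j).det ≤
      p j * ((pushforward W j).trace - n j) := by
    simpa using mul_le_mul_of_nonneg_left (log_det_le_trace_sub_card (hQ j)) (hp j).le
  have htotal : ∑ j, p j * ((pushforward W j).trace - n j) = 0 := by
    simp only [mul_sub, Finset.sum_sub_distrib, sum_mul_trace_pushforward hW, hmin.sum_eq,
      sub_self]
  have heq := (Finset.sum_eq_sum_iff_of_le fun j _ => hterm j).1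
    ((Finset.sum_le_sum fun j _ => hterm j).antisymm (htotal ▸ hinv))
  refine isGeometric_iff.2 ⟨hW, funext fun j => eq_one_of_log_det_eq (hQ j) ?_⟩
  simpa using mul_left_cancel₀ (hp j).ne' (heq j (Finset.mem_univ j))

theorem IsCapMinimizer.geometrizable (hp : ∀ j, 0 < p j) (hY : IsCapMinimizer p V Y) :
    Geometrizable p V := by
  choose h hh hhY using fun j => exists_eq_transpose_mul_self_of_posDef (hY.1 j)
  have hne := Finset.prod_ne_zero_iff.1 (div_ne_zero_iff.1 hY.2.1.ne').1
  have hM (i) : (pullback p V Y i).PosDef :=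
    (posSemidef_pullback (fun j => (hp j).le) (fun j => (hY.1 j).posSemidef)
      i).posDef_iff_det_ne_zero.2 (hne i (Finset.mem_univ i))
  choose K hK hKM using fun i => exists_eq_transpose_mul_self_of_posDef (hM i)
  have hG (i) : IsUnit ((K i)⁻¹).det := isUnit_nonsing_inv_det _ (hK i)
  have hconj : (fun j => (h j)ᵀ * (1 : MatrixTuple n) j * h j) = Y :=
    funext fun j => by rw [Pi.one_apply, Matrix.mul_one, hhY]
  refine ⟨h, fun i => (K i)⁻¹, hh, hG, IsCapMinimizer.isGeometric hp (funext fun i => ?_)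
    ((isCapMinimizer_baseChange_iff hh hG).2 (hconj ▸ hY))⟩
  rw [pullback_baseChange, hconj, ← hKM, ← Matrix.mul_assoc, ← transpose_mul, Matrix.mul_assoc,
    mul_nonsing_inv _ (hK i), transpose_one, Matrix.one_mul, Pi.one_apply]

theorem extremizable_iff_geometrizable (hp : ∀ j, 0 < p j) :
    Extremizable p V ↔ Geometrizable p V := by
  rw [extremizable_iff_exists_isCapMinimizer]
  constructor
  · rintro ⟨Y, hY⟩
    exact hY.geometrizable hp
  · rintro ⟨h, G, hh, hG, hgeom⟩
    exact ⟨_, (isCapMinimizer_baseChange_iff hh hG).1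
      (hgeom.isCapMinimizer_one fun j => (hp j).le)⟩

end ExtremalIsGeometric

section MaximalMinors

variable {ι : Type*} [Fintype ι] [DecidableEq ι]

theorem one_le_det_one_add {P : Matrix ι ι ℝ} (hP : P.PosSemidef) : 1 ≤ (1 + P).det := by
  obtain ⟨U, hU, hUP⟩ := exists_eq_orthogonal_mul_diagonal_mul_transpose hP.isHermitian
  have hdiag : 1 + P = U * diagonal (1 + hP.isHermitian.eigenvalues) * Uᵀ := by
    conv_lhs => rw [← hUP, ← mul_eq_one_comm.1 hU]
    rw [Pi.one_def, Pi.add_def, ← diagonal_add, diagonal_one, Matrix.mul_add, Matrix.add_mul,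
      Matrix.mul_one]
  rw [hdiag, det_mul_comm, ← Matrix.mul_assoc, hU, Matrix.one_mul, det_diagonal]
  exact Finset.one_le_prod fun r _ => le_add_of_nonneg_right (hP.eigenvalues_nonneg r)

theorem det_le_det_add {M P : Matrix ι ι ℝ} (hM : M.PosSemidef) (hP : P.PosSemidef) :
    M.det ≤ (M + P).det := by
  by_cases h0 : M.det = 0
  · exact h0 ▸ (hM.add hP).det_nonneg
  obtain ⟨K, hK, rfl⟩ := exists_eq_transpose_mul_self_of_posDef (hM.posDef_iff_det_ne_zero.2 h0)
  have hfactor : Kᵀ * K + P = Kᵀ * (1 + K⁻¹ᵀ * P * K⁻¹) * K := by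
    calc Kᵀ * K + P = Kᵀ * K + (K⁻¹ * K)ᵀ * P * (K⁻¹ * K) := by
          rw [nonsing_inv_mul _ hK, transpose_one, Matrix.one_mul, Matrix.mul_one]
      _ = Kᵀ * (1 + K⁻¹ᵀ * P * K⁻¹) * K := by
          simp only [transpose_mul, Matrix.mul_add, Matrix.add_mul, Matrix.mul_one,
            Matrix.mul_assoc]
  rw [hfactor, det_mul, det_mul, det_mul, det_transpose, mul_right_comm]
  exact le_mul_of_one_le_right (mul_self_nonneg _)
    (one_le_det_one_add (hP.conjTranspose_mul_mul_same K⁻¹))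

variable {E : Type*} {R : Matrix E ι ℝ}

theorem exists_det_submatrix_ne_zero [Finite E] (hR : Function.Injective R.mulVec) :
    ∃ S : ι → E, (R.submatrix S id).det ≠ 0 := by
  have := Fintype.ofFinite E
  obtain ⟨κ, a, ha, hspan, hli⟩ := exists_linearIndependent' ℝ R.row
  have : Fintype κ := @Fintype.ofFinite κ (Finite.of_injective a ha)
  have hcard : Fintype.card ι = Fintype.card κ := by
    rw [← finrank_span_eq_card hli, hspan, ← rank_eq_finrank_span_row,
      rank_eq_finrank_span_cols, finrank_span_eq_card (mulVec_injective_iff.1 hR)]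
  let e := Fintype.equivOfCardEq hcard
  refine ⟨a ∘ e, ((isUnit_iff_isUnit_det _).1 ?_).ne_zero⟩
  exact linearIndependent_rows_iff_isUnit.1 (hli.comp e e.injective)

-- Select the rows with nonzero minor of maximal total weight: a row using a selected row lighter
-- than itself could be exchanged for it.
theorem exists_det_submatrix_ne_zero_and_le [Finite E] (hR : Function.Injective R.mulVec)
    (θ : E → ℝ) :
    ∃ S : ι → E, (R.submatrix S id).det ≠ 0 ∧
      ∀ e s, (R * (R.submatrix S id)⁻¹) e s ≠ 0 → θ e ≤ θ (S s) := by
  classical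
  have := Fintype.ofFinite E
  obtain ⟨S₀, hS₀⟩ := exists_det_submatrix_ne_zero hR
  obtain ⟨S, hS, hmax⟩ := Finset.exists_max_image {S : ι → E | (R.submatrix S id).det ≠ 0}
    (fun S => ∑ s, θ (S s)) ⟨S₀, by simpa using hS₀⟩
  simp only [Finset.mem_filter, Finset.mem_univ, true_and] at hS hmax
  refine ⟨S, hS, fun e s hes => ?_⟩
  set C := R * (R.submatrix S id)⁻¹
  have hrow : R e = ∑ t, C e t • R.submatrix S id t := by
    have hCR : C * R.submatrix S id = R := by
      rw [Matrix.mul_assoc, nonsing_inv_mul _ (isUnit_iff_ne_zero.2 hS), Matrix.mul_one]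
    funext c
    conv_lhs => rw [← hCR]
    simp only [Matrix.mul_apply, Finset.sum_apply, Pi.smul_apply, smul_eq_mul]
  have hexchange : R.submatrix (Function.update S s e) id =
      (R.submatrix S id).updateRow s (∑ t, C e t • R.submatrix S id t) := by
    rw [← hrow]
    ext t c
    rcases eq_or_ne t s with rfl | hts
    · simp
    · simp [hts]
  have hle := hmax (Function.update S s e) (by
    rw [hexchange, det_updateRow_sum]
    exact smul_ne_zero hes hS)
  rwa [Fintype.sum_eq_add_sum_compl s, Fintype.sum_eq_add_sum_compl s, Function.update_self,
    Finset.sum_congr rfl fun t ht => by rw [Function.update_of_ne (by simpa using ht)],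
    add_le_add_iff_right] at hle

-- The left-hand side is one summand of the Cauchy–Binet expansion of the right-hand side.
theorem prod_mul_det_sq_le_det [Fintype E] [DecidableEq E] {D : E → ℝ} (hD : 0 ≤ D) (S : ι → E) :
    (∏ s, D (S s)) * (R.submatrix S id).det ^ 2 ≤ (Rᵀ * diagonal D * R).det := by
  have hpsd {D' : E → ℝ} (hD' : 0 ≤ D') : (Rᵀ * diagonal D' * R).PosSemidef :=
    (PosSemidef.diagonal hD').conjTranspose_mul_mul_same R
  by_cases hS : Function.Injective S
  swap
  · obtain ⟨s, t, hst, hne⟩ := Function.not_injective_iff.1 hS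
    have hdet : (R.submatrix S id).det = 0 :=
      det_zero_of_row_eq hne (funext fun c => congrArg (R · c) hst)
    simpa only [hdet, ne_eq, OfNat.ofNat_ne_zero, not_false_eq_true, zero_pow, mul_zero] using
      (hpsd hD).det_nonneg
  have hselected : Rᵀ * diagonal ((Set.range S).indicator D) * R =
      (R.submatrix S id)ᵀ * diagonal (D ∘ S) * R.submatrix S id := by
    ext x y
    simp only [Matrix.mul_apply (N := R), Matrix.mul_apply (N := R.submatrix S id), mul_diagonal,
      transpose_apply, submatrix_apply, id, Function.comp]
    refine (Finset.sum_of_injOn S hS.injOn (by simp) (fun e _ he => ?_) fun s _ => ?_).symm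
    · rw [Set.indicator_of_notMem (by simpa using he), mul_zero, zero_mul]
    · rw [Set.indicator_of_mem (Set.mem_range_self s)]
  calc (∏ s, D (S s)) * (R.submatrix S id).det ^ 2
      = (Rᵀ * diagonal ((Set.range S).indicator D) * R).det := by
        rw [hselected, det_mul, det_mul, det_diagonal, det_transpose]
        simp only [Function.comp]
        ring
    _ ≤ (Rᵀ * diagonal ((Set.range S).indicator D) * R +
          Rᵀ * diagonal ((Set.range S)ᶜ.indicator D) * R).det :=
        det_le_det_add (hpsd (Set.indicator_nonneg fun e _ => hD e))
          (hpsd (Set.indicator_nonneg fun e _ => hD e))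
    _ = (Rᵀ * diagonal D * R).det := by
        rw [← Matrix.add_mul, ← Matrix.mul_add, diagonal_add]
        congr
        exact Set.indicator_self_add_compl (Set.range S) D

end MaximalMinors

-- Layer cake: up to a multiple of `∑ q = 0`, the sum `∑ q f` is the integral over `τ` of the
-- superlevel sums of `q`, which are minus its sublevel sums.
theorem sum_mul_pos_of_sublevel_neg {ι : Type*} [Fintype ι] {q f : ι → ℝ} (hq : ∑ s, q s = 0)
    (hf : ∃ s t, f s < f t)
    (hneg : ∀ τ, (∃ s, f s < τ) → (∃ s, τ ≤ f s) → ∑ s with f s < τ, q s < 0) :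
    0 < ∑ s, q s * f s := by
  obtain ⟨s₀, t₀, hst⟩ := hf
  have : Nonempty ι := ⟨s₀⟩
  obtain ⟨a, ha⟩ := Finite.exists_min f
  obtain ⟨b, hb⟩ := Finite.exists_max f
  have hab : f a < f b := (ha s₀).trans_lt (hst.trans_le (hb t₀))
  let layer (s : ι) (τ : ℝ) : ℝ := {τ | τ ≤ f s}.indicator 1 τ
  have hint (s) : IntervalIntegrable (layer s) MeasureTheory.volume (f a) (f b) :=
    Antitone.intervalIntegrable fun τ τ' hττ' => by
      simp only [layer, Set.indicator_apply, Set.mem_ofPred_eq, Pi.one_apply]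
      split_ifs <;> linarith
  have hlayer (s) : ∫ τ in f a..f b, layer s τ = f s - f a := by
    simp only [layer, intervalIntegral.integral_indicator ⟨ha s, hb s⟩, Pi.one_apply,
      intervalIntegral.integral_const, smul_eq_mul, mul_one]
  have hcake : ∫ τ in f a..f b, ∑ s, q s * layer s τ = ∑ s, q s * f s := by
    rw [intervalIntegral.integral_finsetSum fun s _ => (hint s).const_mul _]
    simp only [intervalIntegral.integral_const_mul, hlayer, mul_sub, Finset.sum_sub_distrib,
      ← Finset.sum_mul, hq, zero_mul, sub_zero]
  rw [← hcake]
  refine intervalIntegral.intervalIntegral_pos_of_pos_on ?_ (fun τ hτ => ?_) hab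
  · simpa only [Finset.sum_fn] using
      IntervalIntegrable.sum Finset.univ fun s _ => (hint s).const_mul (q s)
  · have hsuper : ∑ s, q s * layer s τ = ∑ s with ¬ f s < τ, q s := by
      simp [layer, Set.indicator_apply, Finset.sum_filter]
    have hsplit := Finset.sum_filter_add_sum_filter_not Finset.univ (fun s => f s < τ) q
    linarith [hneg τ ⟨a, hτ.1⟩ ⟨b, hτ.2.le⟩]

theorem exists_pos_forall_exists_le_of_isCompact {X κ : Type*} [TopologicalSpace X] [Finite κ]
    {K : Set X} (hK : IsCompact K) {φ : κ → X → ℝ} (hφ : ∀ i, ContinuousOn (φ i) K)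
    (hpos : ∀ z ∈ K, ∃ i, 0 < φ i z) : ∃ c, 0 < c ∧ ∀ z ∈ K, ∃ i, c ≤ φ i z := by
  have := Fintype.ofFinite κ
  rcases isEmpty_or_nonempty κ with hκ | hκ
  · exact ⟨1, one_pos, fun z hz => (hκ.false (hpos z hz).choose).elim⟩
  obtain ⟨c, hc, hcK⟩ := hK.exists_forall_le' (ContinuousOn.finset_sup'_apply
    Finset.univ_nonempty fun i _ => hφ i) (a := 0) fun z hz => by
      simpa [Finset.lt_sup'_iff] using hpos z hz
  exact ⟨c, hc, fun z hz => by simpa [Finset.le_sup'_iff] using hcK z hz⟩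

/-- The index set of all rows of all arrow matrices out of the source `i`. -/
abbrev ArrowRow {k m : ℕ} (n : Fin m → ℕ) (A : Fin k → Fin m → ℕ) (i : Fin k) :=
  Σ j, Fin (A i j) × Fin (n j)

/-- The coordinate of a sink which a row of an arrow matrix computes. -/
def rowSink {k m : ℕ} {n : Fin m → ℕ} {A : Fin k → Fin m → ℕ} {i : Fin k} (e : ArrowRow n A i) :
    Σ j, Fin (n j) :=
  ⟨e.1, e.2.2⟩

/-- The arrow matrices `U_jᵀ W_a` out of the source `i`, stacked on top of each other; for
orthogonal `U` they are those of `W` in the orthonormal bases of the sinks formed by the columns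
of `U`. -/
def stackedRows {k m : ℕ} {d : Fin k → ℕ} {n : Fin m → ℕ} {A : Fin k → Fin m → ℕ}
    (W : QuiverDatum d n A) (U : MatrixTuple n) (i : Fin k) :
    Matrix (ArrowRow n A i) (Fin (d i)) ℝ :=
  Matrix.of fun e => ((U e.1)ᵀ * W i e.1 e.2.1) e.2.2

/-- The positive definite tuple with orthonormal eigenbases `U` and logarithmic eigenvalues `t`. -/
noncomputable def expTuple {m : ℕ} {n : Fin m → ℕ} (U : MatrixTuple n)
    (t : (Σ j, Fin (n j)) → ℝ) : MatrixTuple n :=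
  fun j => U j * diagonal (fun r => Real.exp (t ⟨j, r⟩)) * (U j)ᵀ

/-- The choice of a maximal square submatrix in the stacked matrix of each source. -/
abbrev RowSelection {k m : ℕ} (d : Fin k → ℕ) (n : Fin m → ℕ) (A : Fin k → Fin m → ℕ) :=
  ∀ i, Fin (d i) → ArrowRow n A i

/-- The constant factor of the summand of the Cauchy–Binet expansion of
`capVal p W (expTuple U t)` given by a row selection. -/
noncomputable def minorWeight {k m : ℕ} {d : Fin k → ℕ} {n : Fin m → ℕ} {A : Fin k → Fin m → ℕ}
    (p : Fin m → ℝ) (W : QuiverDatum d n A) (U : MatrixTuple n) (S : RowSelection d n A) : ℝ :=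
  ∏ i, (∏ s, p (S i s).1) * ((stackedRows W U i).submatrix (S i) id).det ^ 2

/-- The exponent of the summand of the Cauchy–Binet expansion of `capVal p W (expTuple U t)` given
by a row selection. -/
noncomputable def minorExponent {k m : ℕ} {d : Fin k → ℕ} {n : Fin m → ℕ} {A : Fin k → Fin m → ℕ}
    (p : Fin m → ℝ) (S : RowSelection d n A) (t : (Σ j, Fin (n j)) → ℝ) : ℝ :=
  ∑ i, ∑ s, t (rowSink (S i s)) - ∑ x, p x.1 * t x

/-- The span of the members of a family with weight below `τ`. -/
def sublevelSpan {ι M : Type*} [AddCommGroup M] [Module ℝ M] (v : ι → M) (f : ι → ℝ) (τ : ℝ) :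
    Submodule ℝ M :=
  Submodule.span ℝ (v '' {s | f s < τ})

theorem finrank_sublevelSpan {ι M : Type*} [Fintype ι] [AddCommGroup M] [Module ℝ M] {v : ι → M}
    (hv : LinearIndependent ℝ v) (f : ι → ℝ) (τ : ℝ) :
    Module.finrank ℝ (sublevelSpan v f τ) = Finset.card {s | f s < τ} := by
  rw [sublevelSpan, Set.image_eq_range]
  exact (finrank_span_eq_card (hv.comp _ Subtype.val_injective)).trans (Fintype.card_subtype _)

section Stable

variable {k m : ℕ} {d : Fin k → ℕ} {n : Fin m → ℕ} {A : Fin k → Fin m → ℕ} {p : Fin m → ℝ}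
  {W : QuiverDatum d n A} {U : MatrixTuple n} {t : (Σ j, Fin (n j)) → ℝ}

theorem Stable.sum_finrank_le (hW : Stable p W) {U₁ : ∀ i, Submodule ℝ (Fin (d i) → ℝ)}
    {U₂ : ∀ j, Submodule ℝ (Fin (n j) → ℝ)}
    (hU : ∀ i j a, (U₁ i).map (W i j a).mulVecLin ≤ U₂ j) :
    ∑ i, (Module.finrank ℝ (U₁ i) : ℝ) ≤ ∑ j, p j * (Module.finrank ℝ (U₂ j) : ℝ) := by
  by_cases hbot : (∀ i, U₁ i = ⊥) ∧ ∀ j, U₂ j = ⊥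
  · obtain ⟨rfl, rfl⟩ : U₁ = ⊥ ∧ U₂ = ⊥ := hbot.imp funext funext
    simp
  by_cases htop : (∀ i, U₁ i = ⊤) ∧ ∀ j, U₂ j = ⊤
  · obtain ⟨rfl, rfl⟩ : U₁ = ⊤ ∧ U₂ = ⊤ := htop.imp funext funext
    simp [hW.2.1]
  exact (hW.2.2 U₁ U₂ hU hbot htop).le

theorem Stable.injective_mulVec_stackedRows (hW : Stable p W) (hU : ∀ j, (U j)ᵀ * U j = 1)
    (i : Fin k) : Function.Injective (stackedRows W U i).mulVec := by
  let N (i) : Submodule ℝ (Fin (d i) → ℝ) := ⨅ j, ⨅ a, LinearMap.ker (W i j a).mulVecLin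
  have hN : ∑ i, (Module.finrank ℝ (N i) : ℝ) ≤ 0 := by
    simpa using hW.sum_finrank_le (U₁ := N) (U₂ := fun _ => ⊥) fun i j a =>
      Submodule.map_le_iff_le_comap.2 ((iInf_le _ j).trans (iInf_le _ a))
  have hNi : N i = ⊥ := Submodule.finrank_eq_zero.1 (by
    exact_mod_cast (Finset.sum_eq_zero_iff_of_nonneg fun i _ => Nat.cast_nonneg _).1
      (hN.antisymm (Finset.sum_nonneg fun i _ => Nat.cast_nonneg _)) i (Finset.mem_univ i))
  refine (injective_iff_map_eq_zero (stackedRows W U i).mulVecLin).2 fun x hx => ?_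
  refine (Submodule.mem_bot ℝ).1 (hNi ▸ ?_)
  simp only [N, Submodule.mem_iInf, LinearMap.mem_ker, mulVecLin_apply]
  intro j a
  have hzero : ((U j)ᵀ * W i j a) *ᵥ x = 0 := funext fun r => congrFun hx ⟨j, a, r⟩
  rw [← Matrix.one_mul (W i j a), ← mul_eq_one_comm.1 (hU j), Matrix.mul_assoc, ← mulVec_mulVec,
    hzero, mulVec_zero]

theorem pullback_expTuple (i : Fin k) :
    pullback p W (expTuple U t) i = (stackedRows W U i)ᵀ *
      diagonal (fun e : ArrowRow n A i => p e.1 * Real.exp (t (rowSink e))) *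
        stackedRows W U i := by
  have harrow (j) (a : Fin (A i j)) : (W i j a)ᵀ * expTuple U t j * W i j a =
      ((U j)ᵀ * W i j a)ᵀ * diagonal (fun r => Real.exp (t ⟨j, r⟩)) * ((U j)ᵀ * W i j a) := by
    simp only [expTuple, transpose_mul, transpose_transpose, Matrix.mul_assoc]
  simp only [pullback, harrow]
  ext x y
  rw [Matrix.mul_apply, Fintype.sum_sigma, Matrix.sum_apply]
  refine Finset.sum_congr rfl fun j _ => ?_
  rw [Fintype.sum_prod_type, Matrix.smul_apply, Matrix.sum_apply, smul_eq_mul, Finset.mul_sum]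
  refine Finset.sum_congr rfl fun a _ => ?_
  rw [Matrix.mul_apply, Finset.mul_sum]
  refine Finset.sum_congr rfl fun r _ => ?_
  simp only [mul_diagonal, transpose_apply, stackedRows, rowSink, of_apply]
  ring

theorem posDef_expTuple (hU : ∀ j, (U j)ᵀ * U j = 1) (j : Fin m) : (expTuple U t j).PosDef := by
  rw [expTuple]
  nth_rw 1 [← transpose_transpose (U j)]
  refine (posDef_transpose_mul_mul_iff ?_).2 (PosDef.diagonal fun _ => Real.exp_pos _)
  exact (isUnit_iff_isUnit_det _).1 (IsUnit.of_mul_eq_one _ (hU j))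

theorem prod_det_expTuple_rpow (hU : ∀ j, (U j)ᵀ * U j = 1) :
    ∏ j, (expTuple U t j).det ^ p j = Real.exp (∑ x, p x.1 * t x) := by
  rw [Fintype.sum_sigma, Real.exp_sum]
  refine Finset.prod_congr rfl fun j _ => ?_
  rw [expTuple, det_mul_right_comm, mul_eq_one_comm.1 (hU j), Matrix.one_mul, det_diagonal,
    ← Real.exp_sum, ← Real.exp_mul, mul_comm, Finset.mul_sum]

theorem minorWeight_mul_exp_minorExponent_le (hp : ∀ j, 0 ≤ p j) (hU : ∀ j, (U j)ᵀ * U j = 1)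
    (S : RowSelection d n A) :
    minorWeight p W U S * Real.exp (minorExponent p S t) ≤ capVal p W (expTuple U t) := by
  rw [capVal_eq, prod_det_expTuple_rpow hU, minorExponent, Real.exp_sub, ← mul_div_assoc]
  refine div_le_div_of_nonneg_right ?_ (Real.exp_pos _).le
  rw [minorWeight, Real.exp_sum, ← Finset.prod_mul_distrib]
  refine Finset.prod_le_prod (fun i _ => mul_nonneg (mul_nonneg (Finset.prod_nonneg fun s _ =>
    hp _) (sq_nonneg _)) (Real.exp_pos _).le) fun i _ => ?_
  rw [pullback_expTuple]
  have hminor := prod_mul_det_sq_le_det (R := stackedRows W U i)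
    (D := fun e : ArrowRow n A i => p e.1 * Real.exp (t (rowSink e)))
    (fun e => mul_nonneg (hp e.1) (Real.exp_pos _).le) (S i)
  rwa [Finset.prod_mul_distrib, ← Real.exp_sum, mul_right_comm] at hminor

theorem minorExponent_smul (S : RowSelection d n A) (c : ℝ) :
    minorExponent p S (c • t) = c * minorExponent p S t := by
  simp only [minorExponent, Pi.smul_apply, smul_eq_mul, mul_sub, Finset.mul_sum, mul_left_comm c]

theorem map_sublevelSpan_le (hU : ∀ j, (U j)ᵀ * U j = 1) {i : Fin k}
    {S : Fin (d i) → ArrowRow n A i}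
    (hS : ∀ e s, (stackedRows W U i * ((stackedRows W U i).submatrix S id)⁻¹) e s ≠ 0 →
      t (rowSink e) ≤ t (rowSink (S s))) (τ : ℝ) (j : Fin m) (a : Fin (A i j)) :
    (sublevelSpan ((stackedRows W U i).submatrix S id)⁻¹.col (fun s => t (rowSink (S s))) τ).map
        (W i j a).mulVecLin ≤ sublevelSpan (U j).col (fun r => t ⟨j, r⟩) τ := by
  set B := (stackedRows W U i).submatrix S id
  rw [sublevelSpan, Submodule.map_span_le]
  rintro _ ⟨s, hs, rfl⟩
  have hexpand : (W i j a).mulVecLin (B⁻¹.col s) =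
      ∑ r, (stackedRows W U i * B⁻¹) ⟨j, a, r⟩ s • (U j).col r := by
    calc (W i j a).mulVecLin (B⁻¹.col s) = (U j * ((U j)ᵀ * W i j a * B⁻¹)).col s := by
          rw [Matrix.mul_assoc, ← Matrix.mul_assoc, mul_eq_one_comm.1 (hU j), Matrix.one_mul]
          rfl
      _ = ∑ r, (stackedRows W U i * B⁻¹) ⟨j, a, r⟩ s • (U j).col r := by
          funext c
          simp only [Finset.sum_apply, Pi.smul_apply, smul_eq_mul, col_apply, mul_comm _ (U j c _)]
          rfl
  rw [hexpand]
  refine Submodule.sum_mem _ fun r _ => ?_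
  by_cases hr : (stackedRows W U i * B⁻¹) ⟨j, a, r⟩ s = 0
  · rw [hr, zero_smul]
    exact Submodule.zero_mem _
  · exact Submodule.smul_mem _ _ (Submodule.subset_span ⟨r, (hS _ s hr).trans_lt hs, rfl⟩)

-- By `map_sublevelSpan_le`, the sublevel spans at level `τ` form a subrepresentation.
theorem Stable.sum_card_sublevel_lt (hW : Stable p W) (hU : ∀ j, (U j)ᵀ * U j = 1)
    {S : RowSelection d n A} (hdet : ∀ i, ((stackedRows W U i).submatrix (S i) id).det ≠ 0)
    (hS : ∀ i e s, (stackedRows W U i * ((stackedRows W U i).submatrix (S i) id)⁻¹) e s ≠ 0 →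
      t (rowSink e) ≤ t (rowSink (S i s))) {τ : ℝ} (hlow : ∃ x, t x < τ) (hhigh : ∃ x, τ ≤ t x) :
    ∑ i, (Finset.card {s | t (rowSink (S i s)) < τ} : ℝ) <
      ∑ j, p j * Finset.card {r | t ⟨j, r⟩ < τ} := by
  have hB (i) : LinearIndependent ℝ ((stackedRows W U i).submatrix (S i) id)⁻¹.col :=
    linearIndependent_cols_of_isUnit ((isUnit_iff_isUnit_det _).2
      (isUnit_nonsing_inv_det _ (isUnit_iff_ne_zero.2 (hdet i))))
  have hcol (j) : LinearIndependent ℝ (U j).col :=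
    linearIndependent_cols_of_isUnit (IsUnit.of_mul_eq_one _ (mul_eq_one_comm.1 (hU j)))
  have hlt := hW.2.2 _ _ (fun i j a => map_sublevelSpan_le hU (hS i) τ j a) ?_ ?_
  · simpa only [finrank_sublevelSpan (hB _), finrank_sublevelSpan (hcol _)] using hlt
  · rintro ⟨-, hbot⟩
    obtain ⟨⟨j, r⟩, hr⟩ := hlow
    have hmem : (U j).col r ∈ sublevelSpan (U j).col (fun r => t ⟨j, r⟩) τ :=
      Submodule.subset_span ⟨r, hr, rfl⟩
    rw [hbot j] at hmem
    exact (hcol j).ne_zero r ((Submodule.mem_bot ℝ).1 hmem)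
  · rintro ⟨-, htop⟩
    obtain ⟨⟨j, r⟩, hr⟩ := hhigh
    have hcard := finrank_sublevelSpan (hcol j) (fun r => t ⟨j, r⟩) τ
    rw [htop j, finrank_top, Module.finrank_fin_fun] at hcard
    have hall : Finset.univ.filter (fun r => t ⟨j, r⟩ < τ) = Finset.univ :=
      Finset.card_eq_iff_eq_univ _ |>.1 (by rw [← hcard, Fintype.card_fin])
    exact hr.not_gt (Finset.filter_eq_self.1 hall r (Finset.mem_univ r))

theorem Stable.exists_minorExponent_pos (hp : ∀ j, 0 < p j) (hW : Stable p W)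
    (hU : ∀ j, (U j)ᵀ * U j = 1) (ht : ∃ x y, t x < t y) :
    ∃ S : RowSelection d n A, 0 < minorWeight p W U S ∧ 0 < minorExponent p S t := by
  choose S hdet hS using fun i =>
    exists_det_submatrix_ne_zero_and_le (hW.injective_mulVec_stackedRows hU i)
      fun e => t (rowSink e)
  refine ⟨S, Finset.prod_pos fun i _ => mul_pos (Finset.prod_pos fun s _ => hp _)
    (sq_pos_of_ne_zero (hdet i)), ?_⟩
  let q : (Σ i, Fin (d i)) ⊕ (Σ j, Fin (n j)) → ℝ := Sum.elim (fun _ => 1) fun x => -p x.1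
  let f : (Σ i, Fin (d i)) ⊕ (Σ j, Fin (n j)) → ℝ := Sum.elim (fun y => t (rowSink (S y.1 y.2))) t
  have hq : ∑ z, q z = 0 := by
    simp [q, Fintype.sum_sigma, hW.2.1, mul_comm]
  have hexp : ∑ z, q z * f z = minorExponent p S t := by
    simp [q, f, Fintype.sum_sigma, minorExponent, sub_eq_add_neg]
  have hf (z) : ∃ x, f z = t x := by
    rcases z with y | x
    · exact ⟨rowSink (S y.1 y.2), rfl⟩
    · exact ⟨x, rfl⟩
  rw [← hexp]
  obtain ⟨x, y, hxy⟩ := ht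
  refine sum_mul_pos_of_sublevel_neg hq ⟨Sum.inr x, Sum.inr y, hxy⟩
    fun τ ⟨z, hz⟩ ⟨z', hz'⟩ => ?_
  obtain ⟨⟨x, hx⟩, x', hx'⟩ := And.intro (hf z) (hf z')
  have hlt := hW.sum_card_sublevel_lt hU hdet hS ⟨x, hx ▸ hz⟩ ⟨x', hx' ▸ hz'⟩
  refine lt_of_eq_of_lt ?_ (sub_neg.2 hlt)
  simp only [q, f, Finset.sum_filter, Fintype.sum_sum_type, Sum.elim_inl, Sum.elim_inr,
    Fintype.sum_sigma, Finset.natCast_card_filter, Finset.mul_sum, mul_ite, mul_one, mul_zero,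
    sub_eq_add_neg, ← Finset.sum_neg_distrib, apply_ite (Neg.neg : ℝ → ℝ), neg_zero]
  rfl

theorem exists_lt_of_sum_eq_zero {ι : Type*} [Fintype ι] {t : ι → ℝ} (ht : ∑ x, t x = 0)
    (hne : t ≠ 0) : ∃ x y, t x < t y := by
  obtain ⟨z, hz⟩ := Function.ne_iff.1 hne
  obtain ⟨x, -, hx⟩ := Finset.exists_pos_of_sum_zero_of_exists_nonzero (-t)
    (by simpa using ht) ⟨z, Finset.mem_univ z, neg_ne_zero.2 hz⟩
  obtain ⟨y, -, hy⟩ := Finset.exists_pos_of_sum_zero_of_exists_nonzero t ht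
    ⟨z, Finset.mem_univ z, hz⟩
  exact ⟨x, y, (neg_pos.1 hx).trans hy⟩

theorem isCompact_setOf_orthogonal :
    IsCompact {U : MatrixTuple n | ∀ j, (U j)ᵀ * U j = 1} := by
  have hcube : IsCompact (Set.univ.pi fun j => Set.univ.pi fun _ : Fin (n j) =>
      Set.univ.pi fun _ : Fin (n j) => Set.Icc (-1 : ℝ) 1) :=
    isCompact_univ_pi fun _ => isCompact_univ_pi fun _ => isCompact_univ_pi fun _ => isCompact_Icc
  refine IsCompact.of_isClosed_subset hcube ?_ ?_
  · simp only [Set.ofPred_forall]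
    exact isClosed_iInter fun j => isClosed_eq
      (((continuous_apply j).matrix_transpose).matrix_mul (continuous_apply j)) continuous_const
  · intro U hU j _ r _ c _
    exact abs_le.1 (entry_norm_bound_of_unitary (mem_unitaryGroup_iff'.2 (hU j)) r c)

theorem continuous_minorWeight (S : RowSelection d n A) :
    Continuous fun U => minorWeight p W U S := by
  refine continuous_finsetProd _ fun i _ => continuous_const.mul (Continuous.pow ?_ 2)
  refine Continuous.matrix_det (continuous_matrix fun s c => ?_)
  have hU : Continuous fun U : MatrixTuple n => U (S i s).1 := continuous_apply _
  exact (hU.matrix_transpose.matrix_mul continuous_const).matrix_elem _ _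

theorem continuousOn_capVal_expTuple : ContinuousOn
    (fun z : MatrixTuple n × ((Σ j, Fin (n j)) → ℝ) => capVal p W (expTuple z.1 z.2))
    {z | ∀ j, (z.1 j)ᵀ * z.1 j = 1} := by
  have hexp : Continuous fun z : MatrixTuple n × ((Σ j, Fin (n j)) → ℝ) => expTuple z.1 z.2 := by
    refine continuous_pi fun j => ?_
    have hU : Continuous fun z : MatrixTuple n × ((Σ j, Fin (n j)) → ℝ) => z.1 j :=
      (continuous_apply j).comp continuous_fst
    exact (hU.matrix_mul (Continuous.matrix_diagonal (by fun_prop))).matrix_mul hU.matrix_transpose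
  have harrows (i j) : Continuous fun Y : MatrixTuple n => ∑ a, (W i j a)ᵀ * Y j * W i j a :=
    continuous_finsetSum _ fun a _ =>
      (continuous_const.matrix_mul (continuous_apply j)).matrix_mul continuous_const
  have hpull : Continuous fun Y => ∏ i, (pullback p W Y i).det :=
    continuous_finsetProd _ fun i _ => Continuous.matrix_det <| continuous_finsetSum _ fun j _ =>
      (harrows i j).const_smul (p j)
  refine ContinuousOn.congr (f := fun z => (∏ i, (pullback p W (expTuple z.1 z.2) i).det) /
    Real.exp (∑ x, p x.1 * z.2 x)) (Continuous.continuousOn ?_) fun z hz => ?_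
  · exact (hpull.comp hexp).div (by fun_prop) fun z => (Real.exp_pos _).ne'
  · rw [capVal_eq, prod_det_expTuple_rpow hz]

theorem exists_eq_exp_smul_expTuple {Y : MatrixTuple n} (hY : ∀ j, (Y j).PosDef) :
    ∃ (U : MatrixTuple n) (t : (Σ j, Fin (n j)) → ℝ) (s : ℝ),
      (∀ j, (U j)ᵀ * U j = 1) ∧ ∑ x, t x = 0 ∧ Y = Real.exp s • expTuple U t := by
  choose U hU hYU using fun j => exists_eq_orthogonal_mul_diagonal_mul_transpose (hY j).isHermitian
  let l (x : Σ j, Fin (n j)) : ℝ := Real.log ((hY x.1).isHermitian.eigenvalues x.2)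
  let s : ℝ := Finset.univ.expect l
  refine ⟨U, fun x => l x - s, s, hU, ?_, ?_⟩
  · rw [Finset.sum_sub_distrib, Finset.sum_const, Finset.card_smul_expect, sub_self]
  · funext j
    have hexp (r) : Real.exp s * Real.exp (l ⟨j, r⟩ - s) = (hY j).isHermitian.eigenvalues r := by
      rw [← Real.exp_add, add_sub_cancel, Real.exp_log ((hY j).eigenvalues_pos r)]
    rw [Pi.smul_apply, expTuple, ← Matrix.smul_mul, ← Matrix.mul_smul, ← diagonal_smul]
    simp only [Pi.smul_def, smul_eq_mul, hexp, hYU]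

theorem Stable.capVal_expTuple_pos (hp : ∀ j, 0 < p j) (hW : Stable p W)
    (hU : ∀ j, (U j)ᵀ * U j = 1) : 0 < capVal p W (expTuple U t) := by
  choose S hS using fun i => exists_det_submatrix_ne_zero (hW.injective_mulVec_stackedRows hU i)
  have hweight : 0 < minorWeight p W U S := Finset.prod_pos fun i _ =>
    mul_pos (Finset.prod_pos fun s _ => hp _) (sq_pos_of_ne_zero (hS i))
  exact (mul_pos hweight (Real.exp_pos _)).trans_le
    (minorWeight_mul_exp_minorExponent_le (fun j => (hp j).le) hU S)

theorem Stable.exists_uniform_le_minorExponent (hp : ∀ j, 0 < p j) (hW : Stable p W) :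
    ∃ c, 0 < c ∧ ∀ U : MatrixTuple n, (∀ j, (U j)ᵀ * U j = 1) → ∀ t, ∑ x, t x = 0 → ‖t‖ = 1 →
      ∃ S : RowSelection d n A, c ≤ minorWeight p W U S ∧ c ≤ minorExponent p S t := by
  have hK : IsCompact ({U : MatrixTuple n | ∀ j, (U j)ᵀ * U j = 1} ×ˢ
      ({t : (Σ j, Fin (n j)) → ℝ | ∑ x, t x = 0} ∩ Metric.sphere 0 1)) :=
    isCompact_setOf_orthogonal.prod
      ((isCompact_sphere _ _).inter_left (isClosed_eq (by fun_prop) continuous_const))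
  have hcont (S : RowSelection d n A) : Continuous fun z : MatrixTuple n × ((Σ j, Fin (n j)) → ℝ) =>
      min (minorWeight p W z.1 S) (minorExponent p S z.2) := by
    refine Continuous.min ((continuous_minorWeight S).comp continuous_fst) ?_
    unfold minorExponent
    fun_prop
  obtain ⟨c, hc, hcK⟩ := exists_pos_forall_exists_le_of_isCompact hK
    (fun S => (hcont S).continuousOn) fun ⟨U, t⟩ ⟨hU, ht₀, ht₁⟩ => by
      have hne : t ≠ 0 := ne_zero_of_mem_unit_sphere (⟨t, ht₁⟩ : Metric.sphere _ (1 : ℝ))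
      obtain ⟨S, hweight, hexponent⟩ :=
        hW.exists_minorExponent_pos hp hU (exists_lt_of_sum_eq_zero ht₀ hne)
      exact ⟨S, lt_min hweight hexponent⟩
  refine ⟨c, hc, fun U hU t ht₀ ht₁ => ?_⟩
  obtain ⟨S, hS⟩ := hcK (U, t) ⟨hU, ht₀, mem_sphere_zero_iff_norm.2 ht₁⟩
  exact ⟨S, le_min_iff.1 hS⟩

theorem Stable.exists_forall_le_capVal_expTuple (hp : ∀ j, 0 < p j) (hW : Stable p W) (C : ℝ) :
    ∃ R, ∀ U : MatrixTuple n, (∀ j, (U j)ᵀ * U j = 1) → ∀ t, ∑ x, t x = 0 → R < ‖t‖ →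
      C ≤ capVal p W (expTuple U t) := by
  obtain ⟨c, hc, hunif⟩ := hW.exists_uniform_le_minorExponent hp
  refine ⟨max 0 (C / c / c), fun U hU t ht hR => ?_⟩
  obtain ⟨hpos, hlarge⟩ := max_lt_iff.1 hR
  obtain ⟨S, hweight, hexponent⟩ := hunif U hU (‖t‖⁻¹ • t)
    (by simp only [Pi.smul_apply, smul_eq_mul, ← Finset.mul_sum, ht, mul_zero])
    (by rw [norm_smul, norm_inv, norm_norm, inv_mul_cancel₀ hpos.ne'])
  rw [minorExponent_smul, le_inv_mul_iff₀' hpos] at hexponent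
  calc C ≤ c * (c * ‖t‖) := by
        rw [div_div, div_lt_iff₀ (mul_pos hc hc)] at hlarge
        linarith
    _ ≤ minorWeight p W U S * Real.exp (minorExponent p S t) :=
        mul_le_mul hweight (by linarith [Real.add_one_le_exp (minorExponent p S t)])
          (by positivity) (hc.le.trans hweight)
    _ ≤ capVal p W (expTuple U t) :=
        minorWeight_mul_exp_minorExponent_le (fun j => (hp j).le) hU S

theorem Stable.exists_isCapMinimizer (hp : ∀ j, 0 < p j) (hW : Stable p W) :
    ∃ Y, IsCapMinimizer p W Y := by
  obtain ⟨R, hR⟩ := hW.exists_forall_le_capVal_expTuple hp (capVal p W (expTuple 1 0))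
  let K : Set (MatrixTuple n × ((Σ j, Fin (n j)) → ℝ)) :=
    {U | ∀ j, (U j)ᵀ * U j = 1} ×ˢ ({t | ∑ x, t x = 0} ∩ Metric.closedBall 0 (max 0 R))
  have hK : IsCompact K := isCompact_setOf_orthogonal.prod
    ((isCompact_closedBall _ _).inter_left (isClosed_eq (by fun_prop) continuous_const))
  have hone : ((1, 0) : MatrixTuple n × ((Σ j, Fin (n j)) → ℝ)) ∈ K :=
    ⟨fun j => by simp, by simp, by simp⟩
  obtain ⟨⟨U₀, t₀⟩, ⟨hU₀, -⟩, hmin⟩ := hK.exists_isMinOn ⟨_, hone⟩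
    (continuousOn_capVal_expTuple.mono fun z hz => hz.1)
  refine ⟨expTuple U₀ t₀, posDef_expTuple hU₀, hW.capVal_expTuple_pos hp hU₀, fun Z hZ => ?_⟩
  obtain ⟨U, t, s, hU, ht, rfl⟩ := exists_eq_exp_smul_expTuple hZ
  rw [capVal_exp_smul (posDef_expTuple hU), sub_eq_zero.2 hW.2.1, mul_zero, Real.exp_zero, one_mul]
  rcases le_or_gt ‖t‖ (max 0 R) with hsmall | hlarge
  · exact isMinOn_iff.1 hmin (U, t) ⟨hU, ht, mem_closedBall_zero_iff.2 hsmall⟩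
  · exact (isMinOn_iff.1 hmin _ hone).trans (hR U hU t ht ((le_max_right _ _).trans_lt hlarge))

theorem Stable.geometrizable (hp : ∀ j, 0 < p j) (hW : Stable p W) : Geometrizable p W :=
  let ⟨_, hY⟩ := hW.exists_isCapMinimizer hp
  hY.geometrizable hp

end Stable

/-- The position in `Fin N` of an index of the `ℓ`-th block, for consecutive blocks of sizes
`f ℓ` with total size `N`. -/
def blockEquiv {s N : ℕ} {f : Fin s → ℕ} (hf : ∑ ℓ, f ℓ = N) : (Σ ℓ, Fin (f ℓ)) ≃ Fin N :=
  finSigmaFinEquiv.trans (finCongr hf)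

/-- The block diagonal matrix with rectangular blocks `B ℓ`, indexed by initial segments of `ℕ`
as in the statement of the main theorem instead of by the sigma types of `blockDiagonal'`. -/
def finBlockDiagonal {s M N : ℕ} {f g : Fin s → ℕ} (hf : ∑ ℓ, f ℓ = M) (hg : ∑ ℓ, g ℓ = N)
    (B : ∀ ℓ, Matrix (Fin (f ℓ)) (Fin (g ℓ)) ℝ) : Matrix (Fin M) (Fin N) ℝ :=
  (blockDiagonal' B).submatrix (blockEquiv hf).symm (blockEquiv hg).symm

/-- The direct sum of quiver data, with the summands laid out as consecutive blocks at every
vertex. -/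
def directSum {s k m : ℕ} {d : Fin k → ℕ} {n : Fin m → ℕ} {A : Fin k → Fin m → ℕ}
    {dd : Fin s → Fin k → ℕ} {nn : Fin s → Fin m → ℕ}
    (hd : ∀ i, ∑ ℓ, dd ℓ i = d i) (hn : ∀ j, ∑ ℓ, nn ℓ j = n j)
    (X : ∀ ℓ, QuiverDatum (dd ℓ) (nn ℓ) A) : QuiverDatum d n A :=
  fun i j a => finBlockDiagonal (hn j) (hd i) fun ℓ => X ℓ i j a

section FinBlockDiagonal

variable {s L M N : ℕ} {e f g : Fin s → ℕ} {he : ∑ ℓ, e ℓ = L} {hf : ∑ ℓ, f ℓ = M}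
  {hg : ∑ ℓ, g ℓ = N}

theorem blockEquiv_apply (hf : ∑ ℓ, f ℓ = M) (ℓ : Fin s) (r : Fin (f ℓ)) :
    blockEquiv hf ⟨ℓ, r⟩ = Fin.cast hf (fembed f ℓ r) := by
  have hsum : ∑ x : Fin ℓ.val, f (Fin.castLE ℓ.2.le x) = ∑ ℓ' with ℓ' < ℓ, f ℓ' :=
    Finset.sum_bij' (fun x _ => Fin.castLE ℓ.2.le x)
      (fun x hx => ⟨x, Fin.lt_def.1 (Finset.mem_filter.1 hx).2⟩)
      (fun x _ => Finset.mem_filter.2 ⟨Finset.mem_univ _, Fin.lt_def.2 x.2⟩)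
      (fun _ _ => Finset.mem_univ _) (fun _ _ => rfl) (fun _ _ => rfl) (fun _ _ => rfl)
  ext
  simp only [blockEquiv, Equiv.trans_apply, finCongr_apply, Fin.val_cast, finSigmaFinEquiv_apply,
    fembed, hsum]

theorem finBlockDiagonal_apply (B : ∀ ℓ, Matrix (Fin (f ℓ)) (Fin (g ℓ)) ℝ) (ℓ ℓ' : Fin s)
    (r : Fin (f ℓ)) (c : Fin (g ℓ')) :
    finBlockDiagonal hf hg B (Fin.cast hf (fembed f ℓ r)) (Fin.cast hg (fembed g ℓ' c)) =
      if hll : ℓ = ℓ' then B ℓ r (Fin.cast (by rw [hll]) c) else 0 := by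
  rw [← blockEquiv_apply, ← blockEquiv_apply, finBlockDiagonal, submatrix_apply,
    Equiv.symm_apply_apply, Equiv.symm_apply_apply, blockDiagonal'_apply']
  split_ifs with hll
  · subst hll; rfl
  · rfl

theorem eq_finBlockDiagonal_iff {C : Matrix (Fin M) (Fin N) ℝ}
    {B : ∀ ℓ, Matrix (Fin (f ℓ)) (Fin (g ℓ)) ℝ} :
    C = finBlockDiagonal hf hg B ↔ ∀ (ℓ ℓ' : Fin s) (r : Fin (f ℓ)) (c : Fin (g ℓ')),
      C (Fin.cast hf (fembed f ℓ r)) (Fin.cast hg (fembed g ℓ' c)) =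
        if hll : ℓ = ℓ' then B ℓ r (Fin.cast (by rw [hll]) c) else 0 := by
  simp only [← finBlockDiagonal_apply (hf := hf) (hg := hg), ← blockEquiv_apply]
  refine ⟨fun hC _ _ _ _ => hC ▸ rfl, fun hC => ?_⟩
  ext x y
  simpa using hC _ _ ((blockEquiv hf).symm x).2 ((blockEquiv hg).symm y).2

theorem finBlockDiagonal_mul (B : ∀ ℓ, Matrix (Fin (e ℓ)) (Fin (f ℓ)) ℝ)
    (C : ∀ ℓ, Matrix (Fin (f ℓ)) (Fin (g ℓ)) ℝ) :
    finBlockDiagonal he hf B * finBlockDiagonal hf hg C =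
      finBlockDiagonal he hg fun ℓ => B ℓ * C ℓ := by
  rw [finBlockDiagonal, finBlockDiagonal, submatrix_mul_equiv, ← blockDiagonal'_mul,
    finBlockDiagonal]

theorem finBlockDiagonal_transpose (B : ∀ ℓ, Matrix (Fin (f ℓ)) (Fin (g ℓ)) ℝ) :
    (finBlockDiagonal hf hg B)ᵀ = finBlockDiagonal hg hf fun ℓ => (B ℓ)ᵀ := by
  rw [finBlockDiagonal, transpose_submatrix, blockDiagonal'_transpose, finBlockDiagonal]

theorem finBlockDiagonal_one : finBlockDiagonal hf hf (fun _ => 1) = 1 := by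
  rw [finBlockDiagonal, ← Pi.one_def, blockDiagonal'_one, submatrix_one_equiv]

theorem finBlockDiagonal_smul (c : ℝ) (B : ∀ ℓ, Matrix (Fin (f ℓ)) (Fin (g ℓ)) ℝ) :
    c • finBlockDiagonal hf hg B = finBlockDiagonal hf hg fun ℓ => c • B ℓ := by
  rw [finBlockDiagonal, finBlockDiagonal, ← Pi.smul_def, blockDiagonal'_smul, submatrix_smul]
  rfl

theorem finBlockDiagonal_sum {ι : Type*} (S : Finset ι)
    (B : ι → ∀ ℓ, Matrix (Fin (f ℓ)) (Fin (g ℓ)) ℝ) :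
    ∑ x ∈ S, finBlockDiagonal hf hg (B x) = finBlockDiagonal hf hg fun ℓ => ∑ x ∈ S, B x ℓ := by
  have hsum := map_sum (blockDiagonal'AddMonoidHom (fun ℓ => Fin (f ℓ)) (fun ℓ => Fin (g ℓ)) ℝ) B S
  simp only [blockDiagonal'AddMonoidHom_apply] at hsum
  ext x y
  simp only [finBlockDiagonal, Matrix.sum_apply, submatrix_apply, ← Finset.sum_fn, hsum]

theorem isUnit_det_finBlockDiagonal {B : ∀ ℓ, Matrix (Fin (f ℓ)) (Fin (f ℓ)) ℝ}
    (hB : ∀ ℓ, IsUnit (B ℓ).det) : IsUnit (finBlockDiagonal hf hf B).det := by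
  refine isUnit_det_of_right_inverse (B := finBlockDiagonal hf hf fun ℓ => (B ℓ)⁻¹) ?_
  simp only [finBlockDiagonal_mul, mul_nonsing_inv _ (hB _), finBlockDiagonal_one]

end FinBlockDiagonal

section DirectSum

variable {s k m : ℕ} {d : Fin k → ℕ} {n : Fin m → ℕ} {A : Fin k → Fin m → ℕ}
  {dd : Fin s → Fin k → ℕ} {nn : Fin s → Fin m → ℕ} {hd : ∀ i, ∑ ℓ, dd ℓ i = d i}
  {hn : ∀ j, ∑ ℓ, nn ℓ j = n j} {X : ∀ ℓ, QuiverDatum (dd ℓ) (nn ℓ) A} {p : Fin m → ℝ}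

theorem isGeometric_directSum (hX : ∀ ℓ, IsGeometric p (X ℓ)) :
    IsGeometric p (directSum hd hn X) := by
  simp only [IsGeometric, directSum, finBlockDiagonal_transpose, finBlockDiagonal_mul,
    finBlockDiagonal_sum, finBlockDiagonal_smul, (hX _).1, (hX _).2, finBlockDiagonal_one,
    implies_true, and_self]

theorem baseChange_directSum (H : ∀ ℓ, MatrixTuple (nn ℓ)) (G : ∀ ℓ, MatrixTuple (dd ℓ)) :
    baseChange (fun j => finBlockDiagonal (hn j) (hn j) fun ℓ => H ℓ j) (directSum hd hn X)
        (fun i => finBlockDiagonal (hd i) (hd i) fun ℓ => G ℓ i) =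
      directSum hd hn fun ℓ => baseChange (H ℓ) (X ℓ) (G ℓ) := by
  funext i j a
  simp only [baseChange, directSum, finBlockDiagonal_mul]

theorem geometrizable_directSum (hX : ∀ ℓ, Geometrizable p (X ℓ)) :
    Geometrizable p (directSum hd hn X) := by
  choose H G hH hG hgeo using hX
  refine ⟨fun j => finBlockDiagonal (hn j) (hn j) fun ℓ => H ℓ j,
    fun i => finBlockDiagonal (hd i) (hd i) fun ℓ => G ℓ i,
    fun j => isUnit_det_finBlockDiagonal fun ℓ => hH ℓ j,
    fun i => isUnit_det_finBlockDiagonal fun ℓ => hG ℓ i, ?_⟩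
  rw [baseChange_directSum]
  exact isGeometric_directSum hgeo

theorem Geometrizable.of_baseChange {V : QuiverDatum d n A} {h : MatrixTuple n}
    {G : MatrixTuple d} (hh : ∀ j, IsUnit (h j).det) (hG : ∀ i, IsUnit (G i).det)
    (hV : Geometrizable p (baseChange h V G)) : Geometrizable p V := by
  obtain ⟨h', G', hh', hG', hgeo⟩ := hV
  rw [baseChange_baseChange] at hgeo
  exact ⟨_, _, fun j => (det_mul (h' j) _).symm ▸ (hh' j).mul (hh j),
    fun i => (det_mul (G i) _).symm ▸ (hG i).mul (hG' i), hgeo⟩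

end DirectSum

section CrossTerm

variable {E F : Type*} [NormedAddCommGroup E] [InnerProductSpace ℝ E] [FiniteDimensional ℝ E]
  [NormedAddCommGroup F] [InnerProductSpace ℝ F] [FiniteDimensional ℝ F]

/-- The component of `f` from `Uᗮ` to `Z`: the obstruction to splitting a subrepresentation off
orthogonally. -/
noncomputable def crossTerm (f : E →ₗ[ℝ] F) (U : Submodule ℝ E) (Z : Submodule ℝ F) :
    E →ₗ[ℝ] F :=
  Z.starProjection.toLinearMap ∘ₗ f ∘ₗ Uᗮ.starProjection.toLinearMap

theorem crossTerm_eq_zero_iff {f : E →ₗ[ℝ] F} {U : Submodule ℝ E} {Z : Submodule ℝ F} :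
    crossTerm f U Z = 0 ↔ Uᗮ.map f ≤ Zᗮ := by
  rw [crossTerm, ← LinearMap.range_le_ker_iff, LinearMap.range_comp]
  simp

/-- The squared Hilbert–Schmidt norm. -/
noncomputable def hilbertSchmidtSq (f : E →ₗ[ℝ] F) : ℝ :=
  LinearMap.trace ℝ E (f.adjoint ∘ₗ f)

theorem hilbertSchmidtSq_eq_sum {κ : Type*} [Fintype κ] (f : E →ₗ[ℝ] F)
    (b : OrthonormalBasis κ ℝ E) : hilbertSchmidtSq f = ∑ x, ‖f (b x)‖ ^ 2 := by
  simp only [hilbertSchmidtSq, LinearMap.trace_eq_sum_inner _ b, LinearMap.comp_apply,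
    LinearMap.adjoint_inner_right, real_inner_self_eq_norm_sq]

theorem hilbertSchmidtSq_nonneg (f : E →ₗ[ℝ] F) : 0 ≤ hilbertSchmidtSq f := by
  rw [hilbertSchmidtSq_eq_sum f (stdOrthonormalBasis ℝ E)]
  positivity

theorem hilbertSchmidtSq_eq_zero_iff {f : E →ₗ[ℝ] F} : hilbertSchmidtSq f = 0 ↔ f = 0 := by
  refine ⟨fun hf => (stdOrthonormalBasis ℝ E).toBasis.ext fun x => ?_,
    fun hf => by simp [hf, hilbertSchmidtSq]⟩
  rw [hilbertSchmidtSq_eq_sum f (stdOrthonormalBasis ℝ E),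
    Finset.sum_eq_zero_iff_of_nonneg fun _ _ => sq_nonneg _] at hf
  simpa using hf x (Finset.mem_univ x)

theorem trace_starProjection (U : Submodule ℝ E) :
    LinearMap.trace ℝ E U.starProjection.toLinearMap = Module.finrank ℝ U :=
  LinearMap.IsProj.trace
    ⟨U.starProjection_apply_mem, fun _ => Submodule.starProjection_eq_self_iff.2⟩

theorem starProjection_comp_self (U : Submodule ℝ E) :
    U.starProjection.toLinearMap ∘ₗ U.starProjection.toLinearMap =
      U.starProjection.toLinearMap :=
  LinearMap.ext fun x =>
    Submodule.starProjection_eq_self_iff.2 (U.starProjection_apply_mem x)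

theorem adjoint_starProjection (U : Submodule ℝ E) :
    U.starProjection.toLinearMap.adjoint = U.starProjection.toLinearMap :=
  (LinearMap.isSymmetric_iff_isSelfAdjoint _).1 U.starProjection_isSymmetric

theorem hilbertSchmidtSq_crossTerm {f : E →ₗ[ℝ] F} {U : Submodule ℝ E} {Z : Submodule ℝ F}
    (hf : U.map f ≤ Z) :
    hilbertSchmidtSq (crossTerm f U Z) =
      LinearMap.trace ℝ F ((f ∘ₗ f.adjoint) ∘ₗ Z.starProjection.toLinearMap) -
        LinearMap.trace ℝ E ((f.adjoint ∘ₗ f) ∘ₗ U.starProjection.toLinearMap) := by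
  have hadj : (crossTerm f U Z).adjoint =
      Uᗮ.starProjection.toLinearMap ∘ₗ f.adjoint ∘ₗ Z.starProjection.toLinearMap := by
    simp only [crossTerm, LinearMap.adjoint_comp, adjoint_starProjection, LinearMap.comp_assoc]
  have hcompl : Uᗮ.starProjection.toLinearMap = LinearMap.id - U.starProjection.toLinearMap := by
    rw [Submodule.starProjection_orthogonal, ContinuousLinearMap.toLinearMap_sub,
      ContinuousLinearMap.coe_id]
  have hfix : Z.starProjection.toLinearMap ∘ₗ f ∘ₗ U.starProjection.toLinearMap =
      f ∘ₗ U.starProjection.toLinearMap :=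
    LinearMap.ext fun x => Submodule.starProjection_eq_self_iff.2
      (hf (Submodule.mem_map_of_mem (U.starProjection_apply_mem x)))
  calc hilbertSchmidtSq (crossTerm f U Z)
      = LinearMap.trace ℝ E (f.adjoint ∘ₗ crossTerm f U Z) := by
        rw [hilbertSchmidtSq, hadj, LinearMap.comp_assoc, LinearMap.trace_comp_comm', crossTerm]
        simp only [LinearMap.comp_assoc, starProjection_comp_self]
        simp only [← LinearMap.comp_assoc, starProjection_comp_self]
    _ = LinearMap.trace ℝ E (f.adjoint ∘ₗ Z.starProjection.toLinearMap ∘ₗ f) -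
          LinearMap.trace ℝ E (f.adjoint ∘ₗ f ∘ₗ U.starProjection.toLinearMap) := by
        rw [crossTerm, hcompl, LinearMap.comp_sub, LinearMap.comp_sub, LinearMap.comp_id, hfix,
          LinearMap.comp_sub, map_sub]
    _ = _ := by
        rw [LinearMap.trace_comp_comm', LinearMap.comp_assoc, LinearMap.trace_comp_comm',
          LinearMap.comp_assoc, LinearMap.comp_assoc]

end CrossTerm

section Representation

variable {ι κ : Type*} {α : ι → κ → Type*} {E : ι → Type*} {F : κ → Type*}
  [∀ i, NormedAddCommGroup (E i)] [∀ i, InnerProductSpace ℝ (E i)]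
  [∀ j, NormedAddCommGroup (F j)] [∀ j, InnerProductSpace ℝ (F j)]

/-- Tuples of subspaces of the spaces `E i` at the sources and `F j` at the sinks. -/
abbrev SubspaceTuple (E : ι → Type*) (F : κ → Type*)
    [∀ i, NormedAddCommGroup (E i)] [∀ i, InnerProductSpace ℝ (E i)]
    [∀ j, NormedAddCommGroup (F j)] [∀ j, InnerProductSpace ℝ (F j)] :=
  (∀ i, Submodule ℝ (E i)) × (∀ j, Submodule ℝ (F j))

/-- The tuple of orthogonal complements. -/
noncomputable def SubspaceTuple.orthogonal (U : SubspaceTuple E F) : SubspaceTuple E F :=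
  (fun i => (U.1 i)ᗮ, fun j => (U.2 j)ᗮ)

/-- `U` is a subrepresentation of the representation `w`. -/
def IsSubrep (w : ∀ i j, α i j → E i →ₗ[ℝ] F j) (U : SubspaceTuple E F) : Prop :=
  ∀ i j a, (U.1 i).map (w i j a) ≤ U.2 j

/-- `w` is the direct sum of its restrictions to `U` and to the orthogonal complement of `U`. -/
def IsReducing (w : ∀ i j, α i j → E i →ₗ[ℝ] F j) (U : SubspaceTuple E F) : Prop :=
  IsSubrep w U ∧ IsSubrep w U.orthogonal

/-- `T` is an orthogonally indecomposable summand of `w`. -/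
def IsIrreducibleSummand (w : ∀ i j, α i j → E i →ₗ[ℝ] F j) (T : SubspaceTuple E F) : Prop :=
  Minimal (fun U => IsReducing w U ∧ U ≠ ⊥) T

variable {w : ∀ i j, α i j → E i →ₗ[ℝ] F j} {T U : SubspaceTuple E F}

theorem SubspaceTuple.orthogonal_sup (T U : SubspaceTuple E F) :
    (T ⊔ U).orthogonal = T.orthogonal ⊓ U.orthogonal :=
  Prod.ext (funext fun _ => (Submodule.inf_orthogonal _ _).symm)
    (funext fun _ => (Submodule.inf_orthogonal _ _).symm)

theorem SubspaceTuple.eq_bot_of_le_orthogonal (hU : U ≤ U.orthogonal) : U = ⊥ :=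
  Prod.ext (funext fun i => Submodule.isOrtho_self.1 (hU.1 i))
    (funext fun j => Submodule.isOrtho_self.1 (hU.2 j))

theorem isReducing_top : IsReducing w (⊤ : SubspaceTuple E F) :=
  ⟨fun _ _ _ => le_top, fun i j a => by
    simp [SubspaceTuple.orthogonal]⟩

variable [∀ i, FiniteDimensional ℝ (E i)] [∀ j, FiniteDimensional ℝ (F j)]

/-- The coordinate-free form of `IsGeometric`. -/
def IsGeometricRep [Fintype ι] [Fintype κ] [∀ i j, Fintype (α i j)] (p : κ → ℝ)
    (w : ∀ i j, α i j → E i →ₗ[ℝ] F j) : Prop :=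
  (∀ i, ∑ j, p j • ∑ a, (w i j a).adjoint ∘ₗ w i j a = LinearMap.id) ∧
    ∀ j, ∑ i, ∑ a, w i j a ∘ₗ (w i j a).adjoint = LinearMap.id

theorem SubspaceTuple.orthogonal_orthogonal (U : SubspaceTuple E F) :
    U.orthogonal.orthogonal = U :=
  Prod.ext (funext fun i => (U.1 i).orthogonal_orthogonal)
    (funext fun j => (U.2 j).orthogonal_orthogonal)

theorem SubspaceTuple.le_orthogonal_comm : T ≤ U.orthogonal ↔ U ≤ T.orthogonal :=
  and_congr (forall_congr' fun _ => Submodule.le_orthogonal_iff_le_orthogonal)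
    (forall_congr' fun _ => Submodule.le_orthogonal_iff_le_orthogonal)

theorem SubspaceTuple.orthogonal_inf (T U : SubspaceTuple E F) :
    (T ⊓ U).orthogonal = T.orthogonal ⊔ U.orthogonal := by
  rw [← (T.orthogonal ⊔ U.orthogonal).orthogonal_orthogonal, SubspaceTuple.orthogonal_sup,
    T.orthogonal_orthogonal, U.orthogonal_orthogonal]

theorem SubspaceTuple.sup_orthogonal_inf_of_le (hTU : T ≤ U) : T ⊔ T.orthogonal ⊓ U = U :=
  Prod.ext (funext fun i => Submodule.sup_orthogonal_inf_of_hasOrthogonalProjection (hTU.1 i))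
    (funext fun j => Submodule.sup_orthogonal_inf_of_hasOrthogonalProjection (hTU.2 j))

theorem IsReducing.orthogonal (hU : IsReducing w U) : IsReducing w U.orthogonal :=
  ⟨hU.2, U.orthogonal_orthogonal.symm ▸ hU.1⟩

theorem IsReducing.inf (hT : IsReducing w T) (hU : IsReducing w U) : IsReducing w (T ⊓ U) := by
  refine ⟨fun i j a => (Submodule.map_inf_le _).trans (inf_le_inf (hT.1 i j a) (hU.1 i j a)), ?_⟩
  rw [SubspaceTuple.orthogonal_inf]
  exact fun i j a => (Submodule.map_sup ..).trans_le (sup_le_sup (hT.2 i j a) (hU.2 i j a))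

theorem IsReducing.exists_orthogonal_decomposition [Finite ι] [Finite κ] (hU : IsReducing w U) :
    ∃ S : Finset (SubspaceTuple E F), (∀ T ∈ S, IsIrreducibleSummand w T) ∧
      (S : Set (SubspaceTuple E F)).Pairwise (fun T T' => T ≤ T'.orthogonal) ∧ S.sup id = U := by
  classical
  induction U using WellFoundedLT.induction with
  | ind U ih =>
  by_cases hbot : U = ⊥
  · exact ⟨∅, by simp [hbot]⟩
  obtain ⟨T, hTU, hT⟩ := exists_minimal_le_of_wellFoundedLT (fun U => IsReducing w U ∧ U ≠ ⊥) U
    ⟨hU, hbot⟩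
  have hlt : T.orthogonal ⊓ U < U := inf_le_right.lt_of_ne fun heq =>
    hT.prop.2 (SubspaceTuple.eq_bot_of_le_orthogonal (hTU.trans (inf_eq_right.1 heq)))
  obtain ⟨S, hirr, horth, hsup⟩ := ih _ hlt (hT.prop.1.orthogonal.inf hU)
  have hST (T') (hT' : T' ∈ S) : T' ≤ T.orthogonal :=
    (Finset.le_sup (f := id) hT').trans (hsup.trans_le inf_le_left)
  refine ⟨insert T S, Finset.forall_mem_insert _ _ _ |>.2 ⟨hT, hirr⟩, ?_, ?_⟩
  · rw [Finset.coe_insert, Set.pairwise_insert]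
    exact ⟨horth, fun T' hT' _ => ⟨SubspaceTuple.le_orthogonal_comm.1 (hST T' hT'), hST T' hT'⟩⟩
  · rw [Finset.sup_insert, hsup, id, SubspaceTuple.sup_orthogonal_inf_of_le hTU]

theorem exists_orthogonal_decomposition [Finite ι] [Finite κ]
    (w : ∀ i j, α i j → E i →ₗ[ℝ] F j) :
    ∃ (s : ℕ) (T : Fin s → SubspaceTuple E F), (∀ ℓ, IsIrreducibleSummand w (T ℓ)) ∧
      Pairwise (fun ℓ ℓ' => T ℓ ≤ (T ℓ').orthogonal) ∧ ⨆ ℓ, T ℓ = ⊤ := by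
  obtain ⟨S, hirr, horth, hsup⟩ := (isReducing_top (w := w)).exists_orthogonal_decomposition
  let e : Fin S.card ≃ S := S.equivFin.symm
  refine ⟨S.card, fun ℓ => e ℓ, fun ℓ => hirr _ (e ℓ).2, fun ℓ ℓ' hne => ?_, ?_⟩
  · exact horth (e ℓ).2 (e ℓ').2 (Subtype.coe_injective.ne (e.injective.ne hne))
  · rw [e.iSup_congr (g := Subtype.val) fun _ => rfl, ← hsup, Finset.sup_id_eq_sSup, sSup_eq_iSup']
    rfl

section Geometric

variable [Fintype ι] [Fintype κ] [∀ i j, Fintype (α i j)] {p : κ → ℝ}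

theorem IsGeometricRep.sum_hilbertSchmidtSq_crossTerm (hw : IsGeometricRep p w)
    (hU : IsSubrep w U) :
    ∑ j, p j * ∑ i, ∑ a, hilbertSchmidtSq (crossTerm (w i j a) (U.1 i) (U.2 j)) =
      ∑ j, p j * Module.finrank ℝ (U.2 j) - ∑ i, (Module.finrank ℝ (U.1 i) : ℝ) := by
  have hsink (j) : (Module.finrank ℝ (U.2 j) : ℝ) = ∑ i, ∑ a, LinearMap.trace ℝ (F j)
      ((w i j a ∘ₗ (w i j a).adjoint) ∘ₗ (U.2 j).starProjection.toLinearMap) := by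
    simp only [← Module.End.mul_eq_comp _ (ContinuousLinearMap.toLinearMap _), ← map_sum,
      ← Finset.sum_mul]
    rw [hw.2 j, Module.End.mul_eq_comp, LinearMap.id_comp, trace_starProjection]
  have hsource (i) : (Module.finrank ℝ (U.1 i) : ℝ) = ∑ j, p j * ∑ a, LinearMap.trace ℝ (E i)
      (((w i j a).adjoint ∘ₗ w i j a) ∘ₗ (U.1 i).starProjection.toLinearMap) := by
    simp only [← Module.End.mul_eq_comp _ (ContinuousLinearMap.toLinearMap _), ← map_sum,
      ← smul_eq_mul (α := ℝ), ← map_smul, ← Finset.sum_mul, ← smul_mul_assoc]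
    rw [hw.1 i, Module.End.mul_eq_comp, LinearMap.id_comp, trace_starProjection]
  simp only [hilbertSchmidtSq_crossTerm (hU _ _ _), Finset.sum_sub_distrib, mul_sub, hsink,
    hsource]
  rw [Finset.sum_comm (s := Finset.univ (α := ι))]
  simp only [Finset.mul_sum]

theorem IsGeometricRep.sum_finrank_le (hw : IsGeometricRep p w) (hp : ∀ j, 0 ≤ p j)
    (hU : IsSubrep w U) :
    ∑ i, (Module.finrank ℝ (U.1 i) : ℝ) ≤ ∑ j, p j * Module.finrank ℝ (U.2 j) := by
  rw [← sub_nonneg, ← hw.sum_hilbertSchmidtSq_crossTerm hU]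
  exact Finset.sum_nonneg fun j _ => mul_nonneg (hp j) <| Finset.sum_nonneg fun i _ =>
    Finset.sum_nonneg fun a _ => hilbertSchmidtSq_nonneg _

theorem IsGeometricRep.sum_finrank_eq_iff (hw : IsGeometricRep p w) (hp : ∀ j, 0 < p j)
    (hU : IsSubrep w U) :
    ∑ i, (Module.finrank ℝ (U.1 i) : ℝ) = ∑ j, p j * Module.finrank ℝ (U.2 j) ↔
      IsReducing w U := by
  have hnonneg (j) : 0 ≤ ∑ i, ∑ a, hilbertSchmidtSq (crossTerm (w i j a) (U.1 i) (U.2 j)) :=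
    Finset.sum_nonneg fun i _ => Finset.sum_nonneg fun a _ => hilbertSchmidtSq_nonneg _
  rw [eq_comm, ← sub_eq_zero, ← hw.sum_hilbertSchmidtSq_crossTerm hU,
    Finset.sum_eq_zero_iff_of_nonneg fun j _ => mul_nonneg (hp j).le (hnonneg j)]
  simp only [mul_eq_zero, (hp _).ne', false_or, Finset.sum_eq_zero_iff_of_nonneg,
    Finset.sum_nonneg, hilbertSchmidtSq_nonneg, hilbertSchmidtSq_eq_zero_iff,
    crossTerm_eq_zero_iff, Finset.mem_univ, implies_true, forall_true_left]
  exact ⟨fun h => ⟨hU, fun i j a => h j i a⟩, fun h j i a => h.2 i j a⟩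

theorem IsIrreducibleSummand.sum_finrank_eq (hT : IsIrreducibleSummand w T)
    (hw : IsGeometricRep p w) (hp : ∀ j, 0 < p j) :
    ∑ i, (Module.finrank ℝ (T.1 i) : ℝ) = ∑ j, p j * Module.finrank ℝ (T.2 j) :=
  (hw.sum_finrank_eq_iff hp hT.prop.1.1).2 hT.prop.1

theorem IsIrreducibleSummand.sum_finrank_lt (hT : IsIrreducibleSummand w T)
    (hw : IsGeometricRep p w) (hp : ∀ j, 0 < p j) (hU : IsSubrep w U) (hUT : U < T) (hbot : U ≠ ⊥) :
    ∑ i, (Module.finrank ℝ (U.1 i) : ℝ) < ∑ j, p j * Module.finrank ℝ (U.2 j) := by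
  refine (hw.sum_finrank_le (fun j => (hp j).le) hU).lt_of_ne fun heq => ?_
  exact hT.not_prop_of_lt hUT ⟨(hw.sum_finrank_eq_iff hp hU).1 heq, hbot⟩

end Geometric

end Representation

section StableSummand

variable {k m : ℕ} {A : Fin k → Fin m → ℕ} {E : Fin k → Type*} {F : Fin m → Type*}
  [∀ i, NormedAddCommGroup (E i)] [∀ i, InnerProductSpace ℝ (E i)]
  [∀ j, NormedAddCommGroup (F j)] [∀ j, InnerProductSpace ℝ (F j)]
  {w : ∀ i j, Fin (A i j) → E i →ₗ[ℝ] F j} {T : SubspaceTuple E F}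
  {dd : Fin k → ℕ} {nn : Fin m → ℕ}

theorem IsSubrep.mapsTo (hT : IsSubrep w T) (i j a) :
    Set.MapsTo (w i j a) (T.1 i) (T.2 j) :=
  fun _ hx => hT i j a (Submodule.mem_map_of_mem hx)

/-- The matrices of the subrepresentation `T` in given bases of the subspaces. -/
noncomputable def IsSubrep.toQuiverDatum (hT : IsSubrep w T)
    (b₁ : ∀ i, Module.Basis (Fin (dd i)) ℝ (T.1 i))
    (b₂ : ∀ j, Module.Basis (Fin (nn j)) ℝ (T.2 j)) : QuiverDatum dd nn A :=
  fun i j a => LinearMap.toMatrix (b₁ i) (b₂ j) ((w i j a).restrict (hT.mapsTo i j a))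

/-- The parametrization of a subspace by coordinates in a basis. -/
noncomputable def frame {ι E : Type*} [Fintype ι] [AddCommGroup E] [Module ℝ E]
    {K : Submodule ℝ E} (b : Module.Basis ι ℝ K) : (ι → ℝ) →ₗ[ℝ] E :=
  K.subtype ∘ₗ b.equivFun.symm

section Frame

variable {ι E : Type*} [Fintype ι] [AddCommGroup E] [Module ℝ E] {K : Submodule ℝ E}
  (b : Module.Basis ι ℝ K)

theorem frame_injective : Function.Injective (frame b) :=
  K.injective_subtype.comp b.equivFun.symm.injective

theorem map_frame_top : (⊤ : Submodule ℝ (ι → ℝ)).map (frame b) = K := by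
  rw [frame, Submodule.map_comp, Submodule.map_top, LinearEquiv.range, Submodule.map_top,
    Submodule.range_subtype]

theorem finrank_map_frame (U : Submodule ℝ (ι → ℝ)) :
    Module.finrank ℝ (U.map (frame b)) = Module.finrank ℝ U :=
  (Submodule.equivMapOfInjective _ (frame_injective b) U).finrank_eq.symm

end Frame

theorem IsSubrep.frame_toQuiverDatum_mulVec (hT : IsSubrep w T)
    (b₁ : ∀ i, Module.Basis (Fin (dd i)) ℝ (T.1 i))
    (b₂ : ∀ j, Module.Basis (Fin (nn j)) ℝ (T.2 j)) (i j a) (x : Fin (dd i) → ℝ) :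
    frame (b₂ j) (hT.toQuiverDatum b₁ b₂ i j a *ᵥ x) = w i j a (frame (b₁ i) x) := by
  obtain ⟨y, rfl⟩ := (b₁ i).equivFun.surjective x
  simp only [frame, toQuiverDatum, LinearMap.comp_apply, LinearEquiv.coe_coe,
    Module.Basis.equivFun_apply, LinearMap.toMatrix_mulVec_repr]
  simp only [← Module.Basis.equivFun_apply, LinearEquiv.symm_apply_apply]
  rfl

theorem IsIrreducibleSummand.stable_toQuiverDatum {p : Fin m → ℝ}
    [∀ i, FiniteDimensional ℝ (E i)] [∀ j, FiniteDimensional ℝ (F j)]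
    (hT : IsIrreducibleSummand w T) (hw : IsGeometricRep p w) (hp : ∀ j, 0 < p j)
    (b₁ : ∀ i, Module.Basis (Fin (dd i)) ℝ (T.1 i))
    (b₂ : ∀ j, Module.Basis (Fin (nn j)) ℝ (T.2 j)) :
    Stable p (hT.prop.1.1.toQuiverDatum b₁ b₂) := by
  have hdd (i) : Module.finrank ℝ (T.1 i) = dd i := by simp [Module.finrank_eq_card_basis (b₁ i)]
  have hnn (j) : Module.finrank ℝ (T.2 j) = nn j := by simp [Module.finrank_eq_card_basis (b₂ j)]
  refine ⟨?_, by simpa only [hdd, hnn] using hT.sum_finrank_eq hw hp, fun U₁ U₂ hU hbot htop => ?_⟩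
  · by_contra! hzero
    refine hT.prop.2 (Prod.ext (funext fun i => ?_) (funext fun j => ?_))
    · exact Submodule.finrank_eq_zero.1 ((hdd i).trans (Nat.le_zero.1 (hzero.1 i)))
    · exact Submodule.finrank_eq_zero.1 ((hnn j).trans (Nat.le_zero.1 (hzero.2 j)))
  · let U : SubspaceTuple E F :=
      (fun i => (U₁ i).map (frame (b₁ i)), fun j => (U₂ j).map (frame (b₂ j)))
    have hinj₁ (i) := Submodule.map_injective_of_injective (frame_injective (b₁ i))
    have hinj₂ (j) := Submodule.map_injective_of_injective (frame_injective (b₂ j))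
    have hsub : IsSubrep w U := by
      rintro i j a _ ⟨_, ⟨x, hx, rfl⟩, rfl⟩
      rw [← hT.prop.1.1.frame_toQuiverDatum_mulVec b₁ b₂]
      exact Submodule.mem_map_of_mem (hU i j a (Submodule.mem_map_of_mem hx))
    have hle : U ≤ T :=
      ⟨fun i => (Submodule.map_mono le_top).trans_eq (map_frame_top (b₁ i)),
        fun j => (Submodule.map_mono le_top).trans_eq (map_frame_top (b₂ j))⟩
    have hne_top : U ≠ T := fun heq => htop
      ⟨fun i => hinj₁ i ((congrFun (congrArg Prod.fst heq) i).trans (map_frame_top (b₁ i)).symm),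
        fun j => hinj₂ j ((congrFun (congrArg Prod.snd heq) j).trans (map_frame_top (b₂ j)).symm)⟩
    have hne_bot : U ≠ ⊥ := fun heq => hbot
      ⟨fun i => hinj₁ i ((congrFun (congrArg Prod.fst heq) i).trans (Submodule.map_bot _).symm),
        fun j => hinj₂ j ((congrFun (congrArg Prod.snd heq) j).trans (Submodule.map_bot _).symm)⟩
    simpa only [U, finrank_map_frame] using
      hT.sum_finrank_lt hw hp hsub (hle.lt_of_ne hne_top) hne_bot

end StableSummand

theorem isInternal_of_pairwise_le_orthogonal {ι E : Type*} [DecidableEq ι] [NormedAddCommGroup E]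
    [InnerProductSpace ℝ E] [FiniteDimensional ℝ E] {T : ι → Submodule ℝ E}
    (horth : Pairwise fun ℓ ℓ' => T ℓ ≤ (T ℓ')ᗮ) (htop : ⨆ ℓ, T ℓ = ⊤) :
    DirectSum.IsInternal T :=
  (OrthogonalFamily.of_pairwise horth).isInternal_iff.2
    (by rw [htop, Submodule.top_orthogonal_eq_bot])

section BlockBasis

variable {s M N : ℕ} {E F : Type*} [AddCommGroup E] [Module ℝ E] [AddCommGroup F] [Module ℝ F]
  {f g : Fin s → ℕ} {T : Fin s → Submodule ℝ E} {Z : Fin s → Submodule ℝ F}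

theorem sum_finrank_of_isInternal [FiniteDimensional ℝ F] (hZ : DirectSum.IsInternal Z) :
    ∑ ℓ, Module.finrank ℝ (Z ℓ) = Module.finrank ℝ F := by
  rw [Module.finrank_eq_card_basis (hZ.collectedBasis fun ℓ => Module.finBasis ℝ (Z ℓ))]
  simp

/-- The basis of an internal direct sum obtained by concatenating bases of the summands. -/
noncomputable def blockBasis (hZ : DirectSum.IsInternal Z)
    (b : ∀ ℓ, Module.Basis (Fin (f ℓ)) ℝ (Z ℓ)) (hf : ∑ ℓ, f ℓ = N) : Module.Basis (Fin N) ℝ F :=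
  (hZ.collectedBasis b).reindex (blockEquiv hf)

theorem toMatrix_blockBasis {hT : DirectSum.IsInternal T} {hZ : DirectSum.IsInternal Z}
    {b : ∀ ℓ, Module.Basis (Fin (g ℓ)) ℝ (T ℓ)} {c : ∀ ℓ, Module.Basis (Fin (f ℓ)) ℝ (Z ℓ)}
    {hg : ∑ ℓ, g ℓ = N} {hf : ∑ ℓ, f ℓ = M} {φ : E →ₗ[ℝ] F}
    (hφ : ∀ ℓ, Set.MapsTo φ (T ℓ) (Z ℓ)) :
    LinearMap.toMatrix (blockBasis hT b hg) (blockBasis hZ c hf) φ =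
      finBlockDiagonal hf hg fun ℓ => LinearMap.toMatrix (b ℓ) (c ℓ) (φ.restrict (hφ ℓ)) := by
  rw [finBlockDiagonal, ← LinearMap.toMatrix_directSum_collectedBasis_eq_blockDiagonal' hT hZ]
  ext x y
  simp [blockBasis, LinearMap.toMatrix_apply]

end BlockBasis

section Euclidean

variable {k m : ℕ} {d : Fin k → ℕ} {n : Fin m → ℕ} {A : Fin k → Fin m → ℕ} {p : Fin m → ℝ}
  {W : QuiverDatum d n A}

/-- A quiver datum as a representation on Euclidean spaces. -/
noncomputable def toEuclideanRep (W : QuiverDatum d n A) (i : Fin k) (j : Fin m)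
    (a : Fin (A i j)) : EuclideanSpace ℝ (Fin (d i)) →ₗ[ℝ] EuclideanSpace ℝ (Fin (n j)) :=
  Matrix.toEuclideanLin (W i j a)

theorem IsGeometric.isGeometricRep_toEuclideanRep (hW : IsGeometric p W) :
    IsGeometricRep p (toEuclideanRep W) := by
  have hadj (i j a) : (toEuclideanRep W i j a).adjoint = Matrix.toEuclideanLin (W i j a)ᵀ := by
    rw [toEuclideanRep, ← Matrix.toEuclideanLin_conjTranspose_eq_adjoint,
      conjTranspose_eq_transpose_of_trivial]
  refine ⟨fun i => ?_, fun j => ?_⟩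
  · simp only [hadj]
    simp only [toEuclideanRep, ← Matrix.toLpLin_mul, ← map_sum, ← map_smul, hW.1 i,
      Matrix.toLpLin_one]
  · simp only [hadj]
    simp only [toEuclideanRep, ← Matrix.toLpLin_mul, ← map_sum, hW.2 j, Matrix.toLpLin_one]

theorem toMatrix_toEuclideanRep (W : QuiverDatum d n A) (i j a) :
    LinearMap.toMatrix (EuclideanSpace.basisFun (Fin (d i)) ℝ).toBasis
      (EuclideanSpace.basisFun (Fin (n j)) ℝ).toBasis (toEuclideanRep W i j a) = W i j a :=
  LinearMap.toMatrix_toLin _ _ _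

theorem IsGeometric.exists_baseChange_eq_directSum (hW : IsGeometric p W) (hp : ∀ j, 0 < p j) :
    ∃ (s : ℕ) (dd : Fin s → Fin k → ℕ) (nn : Fin s → Fin m → ℕ)
      (hd : ∀ i, ∑ ℓ, dd ℓ i = d i) (hn : ∀ j, ∑ ℓ, nn ℓ j = n j)
      (h : MatrixTuple n) (G : MatrixTuple d) (X : ∀ ℓ, QuiverDatum (dd ℓ) (nn ℓ) A),
      (∀ j, IsUnit (h j).det) ∧ (∀ i, IsUnit (G i).det) ∧ (∀ ℓ, Stable p (X ℓ)) ∧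
        baseChange h W G = directSum hd hn X := by
  obtain ⟨s, T, hirr, horth, htop⟩ := exists_orthogonal_decomposition (toEuclideanRep W)
  have hint₁ (i) : DirectSum.IsInternal fun ℓ => (T ℓ).1 i :=
    isInternal_of_pairwise_le_orthogonal (fun _ _ hne => (horth hne).1 i) (by
      rw [← iSup_apply, ← Prod.fst_iSup, htop]; rfl)
  have hint₂ (j) : DirectSum.IsInternal fun ℓ => (T ℓ).2 j :=
    isInternal_of_pairwise_le_orthogonal (fun _ _ hne => (horth hne).2 j) (by
      rw [← iSup_apply, ← Prod.snd_iSup, htop]; rfl)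
  have hd (i) := (sum_finrank_of_isInternal (hint₁ i)).trans finrank_euclideanSpace_fin
  have hn (j) := (sum_finrank_of_isInternal (hint₂ j)).trans finrank_euclideanSpace_fin
  let b₁ (ℓ i) := Module.finBasis ℝ ((T ℓ).1 i)
  let b₂ (ℓ j) := Module.finBasis ℝ ((T ℓ).2 j)
  let c₁ (i) := blockBasis (hint₁ i) (fun ℓ => b₁ ℓ i) (hd i)
  let c₂ (j) := blockBasis (hint₂ j) (fun ℓ => b₂ ℓ j) (hn j)
  let e₁ (i) := (EuclideanSpace.basisFun (Fin (d i)) ℝ).toBasis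
  let e₂ (j) := (EuclideanSpace.basisFun (Fin (n j)) ℝ).toBasis
  refine ⟨s, _, _, hd, hn, fun j => (c₂ j).toMatrix (e₂ j), fun i => (e₁ i).toMatrix (c₁ i),
    fun ℓ => (hirr ℓ).prop.1.1.toQuiverDatum (b₁ ℓ) (b₂ ℓ), fun j => ?_, fun i => ?_,
    fun ℓ => (hirr ℓ).stable_toQuiverDatum hW.isGeometricRep_toEuclideanRep hp (b₁ ℓ) (b₂ ℓ), ?_⟩
  · exact isUnit_det_of_right_inverse ((c₂ j).toMatrix_mul_toMatrix_flip (e₂ j))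
  · exact isUnit_det_of_right_inverse ((e₁ i).toMatrix_mul_toMatrix_flip (c₁ i))
  · funext i j a
    rw [baseChange, ← toMatrix_toEuclideanRep W i j a,
      basis_toMatrix_mul_linearMap_toMatrix_mul_basis_toMatrix]
    exact toMatrix_blockBasis fun ℓ => (hirr ℓ).prop.1.1.mapsTo i j a

end Euclidean

theorem extremizable_iff_direct_sum_of_stables_general {k m : ℕ} {d : Fin k → ℕ} {n : Fin m → ℕ}
    {A : Fin k → Fin m → ℕ} (p : Fin m → ℝ) (hp : ∀ j, 0 < p j)
    (V : ∀ i : Fin k, ∀ j : Fin m, Fin (A i j) → Matrix (Fin (n j)) (Fin (d i)) ℝ) :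
    Extremizable p V ↔
      ∃ (s : ℕ) (dd : Fin s → Fin k → ℕ) (nn : Fin s → Fin m → ℕ)
        (hd' : ∀ i, ∑ ℓ : Fin s, dd ℓ i = d i) (hn' : ∀ j, ∑ ℓ : Fin s, nn ℓ j = n j)
        (g : ∀ i : Fin k, Matrix (Fin (d i)) (Fin (d i)) ℝ)
        (h : ∀ j : Fin m, Matrix (Fin (n j)) (Fin (n j)) ℝ)
        (X : ∀ ℓ : Fin s, ∀ i : Fin k, ∀ j : Fin m,
          Fin (A i j) → Matrix (Fin (nn ℓ j)) (Fin (dd ℓ i)) ℝ),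
        (∀ i, IsUnit (g i).det) ∧ (∀ j, IsUnit (h j).det) ∧
        (∀ ℓ, Stable p (X ℓ)) ∧
        (∀ i j a (ℓ ℓ' : Fin s) (r : Fin (nn ℓ j)) (c : Fin (dd ℓ' i)),
          (h j * V i j a * (g i)⁻¹)
              (Fin.cast (hn' j) (fembed (fun ℓ'' => nn ℓ'' j) ℓ r))
              (Fin.cast (hd' i) (fembed (fun ℓ'' => dd ℓ'' i) ℓ' c)) =
            if hll : ℓ = ℓ' then X ℓ i j a r (Fin.cast (by rw [hll]) c) else 0) := by
  rw [extremizable_iff_geometrizable hp]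
  constructor
  · rintro ⟨h, G, hh, hG, hgeo⟩
    obtain ⟨s, dd, nn, hd, hn, h', G', X, hh', hG', hX, hsum⟩ :=
      hgeo.exists_baseChange_eq_directSum hp
    rw [baseChange_baseChange] at hsum
    have hGG' (i) : IsUnit (G i * G' i).det := det_mul (G i) _ ▸ (hG i).mul (hG' i)
    refine ⟨s, dd, nn, hd, hn, fun i => (G i * G' i)⁻¹, fun j => h' j * h j, X,
      fun i => isUnit_nonsing_inv_det _ (hGG' i), fun j => det_mul (h' j) _ ▸ (hh' j).mul (hh j),
      hX, fun i j a => eq_finBlockDiagonal_iff.1 ?_⟩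
    rw [nonsing_inv_nonsing_inv _ (hGG' i)]
    exact congrFun (congrFun (congrFun hsum i) j) a
  · rintro ⟨s, dd, nn, hd, hn, g, h, X, hg, hh, hX, hsum⟩
    have hV : baseChange h V (fun i => (g i)⁻¹) = directSum hd hn X :=
      funext fun i => funext fun j => funext fun a => eq_finBlockDiagonal_iff.2 (hsum i j a)
    refine .of_baseChange hh (fun i => isUnit_nonsing_inv_det _ (hg i)) (hV ▸ ?_)
    exact geometrizable_directSum fun ℓ => (hX ℓ).geometrizable hp

/-- For positive rational weights, `(V, p)` is extremizable iff `V` is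
isomorphic, via base changes `g_i ∈ GL(d_i, ℝ)`, `h_j ∈ GL(n_j, ℝ)`, to a direct sum of
`p`-stable representations: there are dimension vectors `d¹, …, dˢ` summing to the
dimension vector of `V` and block representations `X ℓ` of dimension vector `d^ℓ`, each
`p`-stable, such that every transformed matrix `h_j V_a g_i⁻¹` is block diagonal with
diagonal blocks `X ℓ`. -/
theorem extremizable_iff_direct_sum_of_stables {k m : ℕ} (hk : 0 < k) (hm : 0 < m)
    {d : Fin k → ℕ} {n : Fin m → ℕ} {A : Fin k → Fin m → ℕ} (p : Fin m → ℚ)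
    (hd : ∀ i, 0 < d i) (hn : ∀ j, 0 < n j) (hp : ∀ j, 0 < p j)
    (hbal : ∑ i : Fin k, (d i : ℝ) = ∑ j : Fin m, (p j : ℝ) * (n j : ℝ))
    (V : ∀ i : Fin k, ∀ j : Fin m, Fin (A i j) → Matrix (Fin (n j)) (Fin (d i)) ℝ) :
    Extremizable (fun j => (p j : ℝ)) V ↔
      ∃ (s : ℕ) (dd : Fin s → Fin k → ℕ) (nn : Fin s → Fin m → ℕ)
        (hd' : ∀ i, ∑ ℓ : Fin s, dd ℓ i = d i) (hn' : ∀ j, ∑ ℓ : Fin s, nn ℓ j = n j)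
        (g : ∀ i : Fin k, Matrix (Fin (d i)) (Fin (d i)) ℝ)
        (h : ∀ j : Fin m, Matrix (Fin (n j)) (Fin (n j)) ℝ)
        (X : ∀ ℓ : Fin s, ∀ i : Fin k, ∀ j : Fin m,
          Fin (A i j) → Matrix (Fin (nn ℓ j)) (Fin (dd ℓ i)) ℝ),
        (∀ i, IsUnit (g i).det) ∧ (∀ j, IsUnit (h j).det) ∧
        (∀ ℓ, Stable (fun j => (p j : ℝ)) (X ℓ)) ∧
        (∀ i j a (ℓ ℓ' : Fin s) (r : Fin (nn ℓ j)) (c : Fin (dd ℓ' i)),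
          (h j * V i j a * (g i)⁻¹)
              (Fin.cast (hn' j) (fembed (fun ℓ'' => nn ℓ'' j) ℓ r))
              (Fin.cast (hd' i) (fembed (fun ℓ'' => dd ℓ'' i) ℓ' c)) =
            if hll : ℓ = ℓ' then X ℓ i j a r (Fin.cast (by rw [hll]) c) else 0) :=
  extremizable_iff_direct_sum_of_stables_general _ (fun j => Rat.cast_pos.2 (hp j)) V
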